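/- arXiv:1805.08135 — 2 statements merged into one kernel-verified Lean document; each statement's English description precedes it below -/
import Mathlib

section
/- Let n ≥ 2 be an integer and 0 < λ ≤ Λ real constants. There exist constants M > 1 and σ ∈ (0,1), depending only on n, λ and Λ, such that for every open set Ω ⊆ ℝⁿ containing the closed ball of radius 2√n centered at 0, and every continuous function v : Ω → ℝ that is a viscosity supersolution of M⁻_{λ,Λ}(D²v) ≤ 0 in Ω with G⁻₁(v,Ω) ∩ Q₃ ≠ ∅, one has |G⁻_M(v,Ω) ∩ Q₁| ≥ 1 − σ. -/
open MeasureTheory Metric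
open scoped InnerProductSpace ENNReal

noncomputable section

abbrev Euc (n : ℕ) := EuclideanSpace ℝ (Fin n)

/-- Loewner order -/
def matLE {n : ℕ} (A B : Matrix (Fin n) (Fin n) ℝ) : Prop := (B - A).PosSemidef

/-- Pucci minimal operator -/
def pucciInf {n : ℕ} (lam Lam : ℝ) (M : Matrix (Fin n) (Fin n) ℝ) : ℝ :=
  sInf {t : ℝ | ∃ A : Matrix (Fin n) (Fin n) ℝ,
    A.IsSymm ∧ matLE (lam • 1) A ∧ matLE A (Lam • 1) ∧ t = (A * M).trace}

/-- Hessian matrix via second iterated Fréchet derivative -/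
def hessianMatrix {n : ℕ} (φ : Euc n → ℝ) (x : Euc n) : Matrix (Fin n) (Fin n) ℝ :=
  Matrix.of fun i j =>
    iteratedFDeriv ℝ 2 φ x ![EuclideanSpace.single i 1, EuclideanSpace.single j 1]

/-- viscosity supersolution of M⁻(D²v) ≤ 0 -/
def ViscSupersol {n : ℕ} (lam Lam : ℝ) (Ω : Set (Euc n)) (v : Euc n → ℝ) : Prop :=
  ∀ x₀ ∈ Ω, ∀ φ : Euc n → ℝ,
    (∃ U : Set (Euc n), IsOpen U ∧ x₀ ∈ U ∧ ContDiffOn ℝ 2 φ U) →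
    IsLocalMinOn (fun x => v x - φ x) Ω x₀ →
    pucciInf lam Lam (hessianMatrix φ x₀) ≤ 0

def Gm {n : ℕ} (K : ℝ) (v : Euc n → ℝ) (Ω : Set (Euc n)) : Set (Euc n) :=
  {xb | xb ∈ Ω ∧ ∃ p : Euc n, ∀ x ∈ Ω, v x ≥ v xb + ⟪p, x - xb⟫_ℝ - K / 2 * ‖x - xb‖ ^ 2}

def Am {n : ℕ} (K : ℝ) (v : Euc n → ℝ) (Ω : Set (Euc n)) : Set (Euc n) := Ω \ Gm K v Ω

/-- open cube of side r centered at x -/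
def cube {n : ℕ} (r : ℝ) (x : Euc n) : Set (Euc n) := {y | ∀ i, |y i - x i| < r / 2}

/-!
Let `p₀` be a slope at a contact point of opening `1` in `Q₃`. For every slope `s` with
`‖s - p₀‖ < 1`, slide the sum of a Gaussian barrier and the linear function `⟪s, ·⟫` up to `v`. The
contact point stays inside `B_R`, where `R = 2√n`, because the barrier is much higher on `Q₃` than
on `∂B_R`, and the equation then forces it into `B_{1/2}`, since elsewhere the barrier violates the
equation. At this point a concave paraboloid of some opening `M` touches `v` from below on all
of `Ω`.

The map sending `s` to its contact point cannot contract distances by more than a constant factor.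
Indeed, if `p₁` and `p₂` are slopes of opening `M` at contact points `x₁` and `x₂`, then the vertex
`p + M x` depends on `x` in a Lipschitz way: a jump `q` of the vertex over a distance `r` makes the
distance between `v` and the paraboloid at `x₁` grow with rate `‖q‖` in the direction `q`, whereas
the equation, tested with quadratic polynomials on a slab orthogonal to `q`, shows that this
distance is of order `r ^ 2` at some point of the far face of the slab. Hence the contact points
cover a set whose measure is at least a fixed multiple of that of the unit ball of slopes.
-/

open Filter Set Topology
open scoped NNReal
open InnerProductSpace (rankOne)

section Pucci

variable {n : ℕ} {lam Lam : ℝ}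

theorem hessianMatrix_eq_of_hasFDerivAt {φ : Euc n → ℝ} {g : Euc n → Euc n} {x e : Euc n} {a b : ℝ}
    (hφ : ∀ y, HasFDerivAt φ (innerSL ℝ (g y)) y)
    (hg : HasFDerivAt g (a • rankOne ℝ e e - b • .id ℝ _) x) :
    hessianMatrix φ x = a • Matrix.vecMulVec e.ofLp e.ofLp - b • 1 := by
  have hfderiv : fderiv ℝ φ = fun y => innerSL ℝ (g y) := funext fun y => (hφ y).fderiv
  have hcomp : HasFDerivAt (fun y => innerSL ℝ (g y)) _ x :=
    (innerSL ℝ : Euc n →L[ℝ] _).hasFDerivAt.comp x hg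
  ext i j
  have hentry : hessianMatrix φ x i j =
      ⟪(a • rankOne ℝ e e - b • .id ℝ _) (.single i 1), EuclideanSpace.single j 1⟫_ℝ := by
    rw [hessianMatrix, Matrix.of_apply, iteratedFDeriv_two_apply, hfderiv, hcomp.fderiv]
    rfl
  rw [hentry]
  simp [inner_sub_left, inner_smul_left, Matrix.vecMulVec_apply, Matrix.one_apply,
    EuclideanSpace.inner_single_right, eq_comm]

theorem le_pucciInf (hLam : lam ≤ Lam) {H : Matrix (Fin n) (Fin n) ℝ} {c : ℝ}
    (h : ∀ A, matLE (lam • 1) A → matLE A (Lam • 1) → c ≤ (A * H).trace) :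
    c ≤ pucciInf lam Lam H := by
  refine le_csInf ⟨_, lam • 1, by simp [Matrix.IsSymm], ?_, ?_, rfl⟩ ?_
  · simpa only [matLE, sub_self] using Matrix.PosSemidef.zero
  · simpa only [matLE, ← sub_smul] using Matrix.PosSemidef.one.smul (sub_nonneg.2 hLam)
  · rintro _ ⟨A, -, hl, hu, rfl⟩
    exact h A hl hu

theorem le_pucciInf_rankOne_sub (hLam : lam ≤ Lam) {a b : ℝ} (ha : 0 ≤ a) (hb : 0 ≤ b)
    (e : Euc n) :
    lam * a * ‖e‖ ^ 2 - n * Lam * b ≤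
      pucciInf lam Lam (a • Matrix.vecMulVec e.ofLp e.ofLp - b • 1) := by
  refine le_pucciInf hLam fun A hl hu => ?_
  have hquad : lam * ‖e‖ ^ 2 ≤ e.ofLp ⬝ᵥ A.mulVec e.ofLp := by
    have := hl.dotProduct_mulVec_nonneg e.ofLp
    simp only [Matrix.sub_mulVec, Matrix.smul_mulVec, Matrix.one_mulVec, dotProduct_sub,
      dotProduct_smul, star_trivial, smul_eq_mul] at this
    rw [EuclideanSpace.real_norm_sq_eq]
    simp only [sq]
    exact sub_nonneg.1 this
  have htrace : A.trace ≤ n * Lam := by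
    have := hu.trace_nonneg
    simp only [Matrix.trace_sub, Matrix.trace_smul, Matrix.trace_one, Fintype.card_fin,
      smul_eq_mul] at this
    linarith
  calc lam * a * ‖e‖ ^ 2 - n * Lam * b
      = a * (lam * ‖e‖ ^ 2) - b * (n * Lam) := by ring
    _ ≤ a * (e.ofLp ⬝ᵥ A.mulVec e.ofLp) - b * A.trace := by gcongr
    _ = (A * (a • Matrix.vecMulVec e.ofLp e.ofLp - b • 1)).trace := by
      simp [Matrix.mul_sub, Matrix.mul_vecMulVec, Matrix.trace_vecMulVec, dotProduct_comm]

namespace ViscSupersol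

variable {Ω Ω' : Set (Euc n)} {v : Euc n → ℝ}

theorem mono (hv : ViscSupersol lam Lam Ω v) (hΩ' : IsOpen Ω') (hsub : Ω' ⊆ Ω) :
    ViscSupersol lam Lam Ω' v := fun x hx φ hφ hmin =>
  hv x (hsub hx) φ hφ ((hmin.isLocalMin (hΩ'.mem_nhds hx)).on Ω)

theorem not_isLocalMin_sub (hv : ViscSupersol lam Lam Ω v) (hLam : lam ≤ Lam)
    {φ : Euc n → ℝ} {g : Euc n → Euc n} {x e : Euc n} {a b : ℝ} (hx : x ∈ Ω)
    (hφ : ContDiff ℝ 2 φ) (hgrad : ∀ y, HasFDerivAt φ (innerSL ℝ (g y)) y)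
    (hhess : HasFDerivAt g (a • rankOne ℝ e e - b • .id ℝ _) x) (ha : 0 ≤ a) (hb : 0 ≤ b)
    (hab : n * Lam * b < lam * a * ‖e‖ ^ 2) :
    ¬ IsLocalMin (fun y => v y - φ y) x := by
  intro hmin
  have hle := hv x hx φ ⟨univ, isOpen_univ, mem_univ x, hφ.contDiffOn⟩ (hmin.on Ω)
  rw [hessianMatrix_eq_of_hasFDerivAt hgrad hhess] at hle
  linarith [le_pucciInf_rankOne_sub hLam ha hb e]

end ViscSupersol

end Pucci

section Contact

variable {E : Type*} [NormedAddCommGroup E] [InnerProductSpace ℝ E]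
  {Ω Ω' : Set E} {v : E → ℝ} {K K' : ℝ} {x₁ x₂ p₁ p₂ z : E}

/-- `p` is the slope at `x` of a concave paraboloid of opening `K` which passes through `(x, v x)`
and stays below `v` on `Ω`. The points of `Gm K v Ω` are those of `Ω` that admit such a slope. -/
def IsContactSlope (K : ℝ) (v : E → ℝ) (Ω : Set E) (x p : E) : Prop :=
  ∀ y ∈ Ω, v y ≥ v x + ⟪p, y - x⟫_ℝ - K / 2 * ‖y - x‖ ^ 2

theorem IsContactSlope.mono (h : IsContactSlope K v Ω x₁ p₁) (hK : K ≤ K') (hΩ : Ω' ⊆ Ω) :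
    IsContactSlope K' v Ω' x₁ p₁ := fun y hy =>
  (h y (hΩ hy)).trans' (by gcongr)

-- In terms of `v + K / 2 * ‖·‖ ^ 2`, for which `p + K • x` is a subgradient at a contact point
-- `x` of slope `p`, this is the sum of the two subgradient inequalities.
theorem IsContactSlope.add_inner_le (h₁ : IsContactSlope K v Ω x₁ p₁)
    (h₂ : IsContactSlope K v Ω x₂ p₂) (hx₂ : x₂ ∈ Ω) (hz : z ∈ Ω) :
    v x₁ + ⟪p₁, z - x₁⟫_ℝ - K / 2 * ‖z - x₁‖ ^ 2
      + ⟪(p₂ + K • x₂) - (p₁ + K • x₁), z - x₂⟫_ℝ ≤ v z := by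
  have hsplit : z - x₁ = (z - x₂) + (x₂ - x₁) := by abel
  have hvertex : (p₂ + K • x₂) - (p₁ + K • x₁) = (p₂ - p₁) + K • (x₂ - x₁) := by module
  have hle₁ := h₁ x₂ hx₂
  have hle₂ := h₂ z hz
  rw [hvertex, hsplit, norm_add_sq_real, inner_add_right, inner_add_left,
    inner_sub_left p₂, real_inner_smul_left, real_inner_comm (z - x₂) (x₂ - x₁)]
  linarith

end Contact

theorem exists_isMinOn_sub {X : Type*} [TopologicalSpace X] {s : Set X} {f g : X → ℝ}
    (hs : IsCompact s) (hne : s.Nonempty) (hf : LowerSemicontinuousOn f s) (hg : Continuous g) :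
    ∃ z ∈ s, IsMinOn (fun x => f x - g x) s z := by
  refine LowerSemicontinuousOn.exists_isMinOn hne hs ?_
  simp only [sub_eq_add_neg]
  exact hf.add hg.neg.continuousOn.lowerSemicontinuousOn

section Slab

variable {E : Type*} [NormedAddCommGroup E] [InnerProductSpace ℝ E]
  {Ω : Set E} {v : E → ℝ} {x₁ p e z : E} {M κ α γ r ρ : ℝ}

/-- The part of the slab of half-width `2 * r` around `x₁`, orthogonal to `e`, that lies in the
closed ball of radius `ρ` around `x₁`. -/
def slab (x₁ e : E) (r ρ : ℝ) : Set E := closedBall x₁ ρ ∩ {x | |⟪e, x - x₁⟫_ℝ| ≤ 2 * r}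

theorem isCompact_slab [ProperSpace E] : IsCompact (slab x₁ e r ρ) :=
  (isCompact_closedBall _ _).inter_right (isClosed_le (by fun_prop) continuous_const)

theorem slab_mem_nhds (hz : ‖z - x₁‖ < ρ) (he : |⟪e, z - x₁⟫_ℝ| < 2 * r) :
    slab x₁ e r ρ ∈ 𝓝 z := by
  have hopen : IsOpen {x | |⟪e, x - x₁⟫_ℝ| < 2 * r} := isOpen_lt (by fun_prop) continuous_const
  refine mem_of_superset ((isOpen_ball.inter hopen).mem_nhds ⟨mem_ball_iff_norm.2 hz, he⟩) ?_
  exact inter_subset_inter ball_subset_closedBall fun x hx => le_of_lt (mem_ofPred.1 hx)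

/-- The quadratic polynomial with Hessian `α • e ⊗ e - γ • I` used as a test function on the slab
`|⟪e, x - x₁⟫| ≤ 2 * r`. On the face `⟪e, x - x₁⟫ = -2 * r` it is a paraboloid of opening `γ`. -/
def slabTest (x₁ p e : E) (α γ r : ℝ) (x : E) : ℝ :=
  ⟪p, x - x₁⟫_ℝ - γ / 2 * ‖x - x₁‖ ^ 2 + α / 2 * (⟪e, x - x₁⟫_ℝ + 2 * r) ^ 2

theorem slabTest_self : slabTest x₁ p e α γ r x₁ = 2 * α * r ^ 2 := by
  simp only [slabTest, sub_self, inner_zero_right, norm_zero]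
  ring

theorem contDiff_slabTest : ContDiff ℝ 2 (slabTest x₁ p e α γ r) := by
  have hsub : ContDiff ℝ 2 fun x : E => x - x₁ := by fun_prop
  exact ((contDiff_const.inner ℝ hsub).sub (contDiff_const.mul (hsub.norm_sq ℝ))).add
    (contDiff_const.mul (((contDiff_const.inner ℝ hsub).add contDiff_const).pow 2))

theorem hasFDerivAt_inner_sub (q y : E) :
    HasFDerivAt (fun x => ⟪q, x - x₁⟫_ℝ) (innerSL ℝ q) y :=
  (innerSL ℝ q).hasFDerivAt.comp y ((hasFDerivAt_id y).sub_const x₁)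

theorem hasFDerivAt_slabTest (y : E) :
    HasFDerivAt (slabTest x₁ p e α γ r)
      (innerSL ℝ (p - γ • (y - x₁) + (α * (⟪e, y - x₁⟫_ℝ + 2 * r)) • e)) y := by
  have hsq := ((hasFDerivAt_id y).sub_const x₁).norm_sq
  refine (((hasFDerivAt_inner_sub p y).sub (hsq.const_mul (γ / 2))).add
    ((((hasFDerivAt_inner_sub e y).add_const (2 * r)).pow 2).const_mul (α / 2))).congr_fderiv ?_
  ext u
  simp
  ring

theorem hasFDerivAt_slabTest_gradient (y : E) :
    HasFDerivAt (fun x => p - γ • (x - x₁) + (α * (⟪e, x - x₁⟫_ℝ + 2 * r)) • e)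
      (α • rankOne ℝ e e - γ • .id ℝ _) y := by
  refine (((((hasFDerivAt_id y).sub_const x₁).const_smul γ).const_sub p).add
    ((((hasFDerivAt_inner_sub e y).add_const (2 * r)).const_mul α).smul_const e)).congr_fderiv ?_
  ext u
  simp [smul_smul, sub_eq_neg_add]

theorem IsContactSlope.norm_sub_lt_and_lt_inner (hp : IsContactSlope M v Ω x₁ p) (hκ : 1 ≤ κ)
    (hα : 0 < α) (hr : 0 < r) (hz : z ∈ Ω) (hball : ‖z - x₁‖ ≤ 8 * κ * r)
    (hslab : |⟪e, z - x₁⟫_ℝ| ≤ 2 * r)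
    (hmin : v z - slabTest x₁ p e α (M + α / (2 * κ)) r z ≤ v x₁ - 2 * α * r ^ 2) :
    ‖z - x₁‖ < 8 * κ * r ∧ -(2 * r) < ⟪e, z - x₁⟫_ℝ := by
  have hle := hp z hz
  obtain ⟨hl, hu⟩ := abs_le.1 hslab
  have hgap : 2 * α * r ^ 2 + α / (4 * κ) * ‖z - x₁‖ ^ 2 ≤
      α / 2 * (⟪e, z - x₁⟫_ℝ + 2 * r) ^ 2 := by
    have hhalf : α / (2 * κ) / 2 = α / (4 * κ) := by ring
    rw [slabTest, add_div, add_mul, hhalf] at hmin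
    linarith
  have hαr : 0 < α * r ^ 2 := by positivity
  refine ⟨hball.lt_of_ne fun h => ?_, hl.lt_of_ne fun h => ?_⟩
  · have hsq : (⟪e, z - x₁⟫_ℝ + 2 * r) ^ 2 ≤ (4 * r) ^ 2 := by
      apply sq_le_sq' <;> linarith
    have hlateral : α / (4 * κ) * ‖z - x₁‖ ^ 2 = 16 * κ * (α * r ^ 2) := by
      rw [h]; field_simp; ring
    nlinarith [mul_le_mul_of_nonneg_left hsq hα.le, mul_le_mul_of_nonneg_right hκ hαr.le]
  · have : 0 ≤ α / (4 * κ) * ‖z - x₁‖ ^ 2 := by positivity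
    rw [← h] at hgap
    norm_num at hgap
    linarith

end Slab

namespace ViscSupersol

variable {n : ℕ} {lam Lam κ M α r : ℝ} {Ω : Set (Euc n)} {v : Euc n → ℝ}
  {x₁ x₂ p p₁ p₂ e : Euc n}

-- A minimum of `v - slabTest` over the slab cannot be interior, since there the equation is
-- violated, and comparison with the paraboloid at `x₁` excludes every other part of the boundary.
theorem exists_inner_eq_and_le (hv : ViscSupersol lam Lam Ω v) (hlsc : LowerSemicontinuousOn v Ω)
    (hlam : 0 < lam) (hLam : lam ≤ Lam) (hκ : n * Lam ≤ lam * κ) (hκ1 : 1 ≤ κ) (hM : 0 ≤ M)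
    (hp : IsContactSlope M v Ω x₁ p) (he : ‖e‖ = 1) (hα : 2 * (κ * M) < α) (hr : 0 < r)
    (hball : closedBall x₁ (8 * κ * r) ⊆ Ω) :
    ∃ z ∈ Ω, ⟪e, z - x₁⟫_ℝ = 2 * r ∧
      v z ≤ v x₁ + ⟪p, z - x₁⟫_ℝ - M / 2 * ‖z - x₁‖ ^ 2 + 6 * α * r ^ 2 := by
  have hα0 : 0 < α := hα.trans_le' (by positivity)
  set γ := M + α / (2 * κ) with hγ
  have hγ0 : 0 < γ := by positivity
  let S := slab x₁ e r (8 * κ * r)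
  have hSΩ : S ⊆ Ω := inter_subset_left.trans hball
  have hx₁S : x₁ ∈ S := ⟨mem_closedBall_self (by positivity), by simp [hr.le]⟩
  obtain ⟨z, hzS, hz⟩ := exists_isMinOn_sub isCompact_slab ⟨x₁, hx₁S⟩ (hlsc.mono hSΩ)
    (contDiff_slabTest (x₁ := x₁) (p := p) (e := e) (α := α) (γ := γ) (r := r)).continuous
  have hle : v z - slabTest x₁ p e α γ r z ≤ v x₁ - 2 * α * r ^ 2 := by
    simpa only [slabTest_self] using isMinOn_iff.1 hz x₁ hx₁S
  obtain ⟨hlateral, hbottom⟩ := hp.norm_sub_lt_and_lt_inner hκ1 hα0 hr (hSΩ hzS)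
    (mem_closedBall_iff_norm.1 hzS.1) hzS.2 hle
  have htop : ⟪e, z - x₁⟫_ℝ = 2 * r := by
    refine (le_of_abs_le hzS.2).antisymm (not_lt.1 fun hlt => ?_)
    have hnhds : S ∈ 𝓝 z := slab_mem_nhds hlateral (abs_lt.2 ⟨hbottom, hlt⟩)
    refine hv.not_isLocalMin_sub hLam (hSΩ hzS) contDiff_slabTest hasFDerivAt_slabTest
      (hasFDerivAt_slabTest_gradient z) hα0.le hγ0.le ?_ (hz.isLocalMin hnhds)
    calc n * Lam * γ ≤ lam * κ * γ := by gcongr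
      _ = lam * (κ * M + α / 2) := by rw [hγ]; field_simp
      _ < lam * α := by gcongr; linarith
      _ = lam * α * ‖e‖ ^ 2 := by rw [he]; ring
  refine ⟨z, hSΩ hzS, htop, ?_⟩
  have : 0 ≤ α / (2 * κ) / 2 * ‖z - x₁‖ ^ 2 := by positivity
  simp only [slabTest, htop, hγ, add_div, add_mul] at hle
  linarith

theorem norm_vertex_sub_le_of_lt (hv : ViscSupersol lam Lam Ω v)
    (hlsc : LowerSemicontinuousOn v Ω) (hlam : 0 < lam) (hLam : lam ≤ Lam)
    (hκ : n * Lam ≤ lam * κ) (hκ1 : 1 ≤ κ) (hM : 0 ≤ M) (hx₂ : x₂ ∈ Ω)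
    (h₁ : IsContactSlope M v Ω x₁ p₁) (h₂ : IsContactSlope M v Ω x₂ p₂)
    (hα : 2 * (κ * M) < α) (hr : ‖x₂ - x₁‖ < r) (hball : closedBall x₁ (8 * κ * r) ⊆ Ω) :
    ‖(p₂ + M • x₂) - (p₁ + M • x₁)‖ ≤ 6 * α * r := by
  have hr0 : 0 < r := (norm_nonneg _).trans_lt hr
  set q := (p₂ + M • x₂) - (p₁ + M • x₁) with hq
  rcases eq_or_ne q 0 with hq0 | hq0
  · have : 0 < α := hα.trans_le' (by positivity)
    rw [hq0, norm_zero]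
    positivity
  set e : Euc n := ‖q‖⁻¹ • q
  have hunit : ‖e‖ = 1 := norm_smul_inv_norm hq0
  have hqe : q = ‖q‖ • e := (smul_inv_smul₀ (norm_ne_zero_iff.2 hq0) q).symm
  obtain ⟨z, hzΩ, hze, hzle⟩ :=
    hv.exists_inner_eq_and_le hlsc hlam hLam hκ hκ1 hM h₁ hunit hα hr0 hball
  have hx₂e : ⟪e, x₂ - x₁⟫_ℝ ≤ r :=
    (real_inner_le_norm _ _).trans (by rw [hunit, one_mul]; exact hr.le)
  have hqz : ‖q‖ * r ≤ ⟪q, z - x₂⟫_ℝ := by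
    calc ‖q‖ * r ≤ ‖q‖ * (⟪e, z - x₁⟫_ℝ - ⟪e, x₂ - x₁⟫_ℝ) := by gcongr; linarith
      _ = ⟪q, z - x₂⟫_ℝ := by
        rw [← inner_sub_right, sub_sub_sub_cancel_right, ← real_inner_smul_left, ← hqe]
  have hsum := h₁.add_inner_le h₂ hx₂ hzΩ
  rw [← hq] at hsum
  refine le_of_mul_le_mul_right ?_ hr0
  linarith

theorem norm_vertex_sub_le (hv : ViscSupersol lam Lam Ω v)
    (hlsc : LowerSemicontinuousOn v Ω) (hlam : 0 < lam) (hLam : lam ≤ Lam)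
    (hκ : n * Lam ≤ lam * κ) (hκ1 : 1 ≤ κ) (hM : 0 ≤ M) (hx₂ : x₂ ∈ Ω)
    (h₁ : IsContactSlope M v Ω x₁ p₁) (h₂ : IsContactSlope M v Ω x₂ p₂)
    (hr : ‖x₂ - x₁‖ < r) (hball : closedBall x₁ (8 * κ * r) ⊆ Ω) :
    ‖(p₂ + M • x₂) - (p₁ + M • x₁)‖ ≤ 12 * (κ * M) * ‖x₂ - x₁‖ := by
  have hlim : Tendsto (fun t => 6 * (2 * (κ * M) + t) * (‖x₂ - x₁‖ + t)) (𝓝[>] 0)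
      (𝓝 (12 * (κ * M) * ‖x₂ - x₁‖)) := by
    refine tendsto_nhdsWithin_of_tendsto_nhds (Continuous.tendsto' (by fun_prop) _ _ ?_)
    ring
  refine ge_of_tendsto hlim ?_
  filter_upwards [Ioo_mem_nhdsGT (sub_pos.2 hr)] with t ht
  refine hv.norm_vertex_sub_le_of_lt hlsc hlam hLam hκ hκ1 hM hx₂ h₁ h₂
    (lt_add_of_pos_right _ ht.1) (lt_add_of_pos_right _ ht.1) (.trans ?_ hball)
  gcongr
  linarith [ht.2]

end ViscSupersol

section Gaussian

variable {E : Type*} [NormedAddCommGroup E] {α A : ℝ}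

/-- The Gaussian barrier of height `A` centered at the origin. As a test function it violates the
equation away from the origin once `α` is large. -/
def gaussianBump (α A : ℝ) (x : E) : ℝ := A * Real.exp (-(α * ‖x‖ ^ 2))

theorem gaussianBump_pos (hA : 0 < A) (x : E) : 0 < gaussianBump α A x :=
  mul_pos hA (Real.exp_pos _)

theorem gaussianBump_nonneg (hA : 0 ≤ A) (x : E) : 0 ≤ gaussianBump α A x :=
  mul_nonneg hA (Real.exp_pos _).le

theorem gaussianBump_le (hα : 0 ≤ α) (hA : 0 ≤ A) (x : E) : gaussianBump α A x ≤ A :=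
  mul_le_of_le_one_right hA (Real.exp_le_one_iff.2 (neg_nonpos.2 (by positivity)))

theorem exists_gaussianBump_gap (hα : 0 < α) {r R : ℝ} (hr : 0 ≤ r) (hrR : r < R) (c : ℝ) :
    ∃ A > 0, ∀ x z : E, ‖x‖ ≤ r → ‖z‖ = R → gaussianBump α A z + c < gaussianBump α A x := by
  have hgap : 0 < Real.exp (-(α * r ^ 2)) - Real.exp (-(α * R ^ 2)) := by
    rw [sub_pos, Real.exp_lt_exp]
    gcongr
  obtain ⟨A, hA⟩ := exists_gt (max 0 (c / (Real.exp (-(α * r ^ 2)) - Real.exp (-(α * R ^ 2)))))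
  obtain ⟨hA0, hAc⟩ := max_lt_iff.1 hA
  refine ⟨A, hA0, fun x z hx hz => ?_⟩
  have hmono : A * Real.exp (-(α * r ^ 2)) ≤ A * Real.exp (-(α * ‖x‖ ^ 2)) := by gcongr
  rw [div_lt_iff₀ hgap] at hAc
  rw [gaussianBump, gaussianBump, hz]
  linarith

/-- The gradient of `gaussianBump α A`. -/
def gaussianBumpGradient [NormedSpace ℝ E] (α A : ℝ) (x : E) : E :=
  -(2 * α * gaussianBump α A x) • x

theorem norm_gaussianBumpGradient_le [NormedSpace ℝ E] (hα : 0 ≤ α) (hA : 0 ≤ A) (x : E) :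
    ‖gaussianBumpGradient α A x‖ ≤ 2 * α * A * ‖x‖ := by
  have h0 : 0 ≤ gaussianBump α A x := gaussianBump_nonneg hA _
  rw [gaussianBumpGradient, norm_smul, norm_neg, Real.norm_of_nonneg (by positivity)]
  gcongr
  exact gaussianBump_le hα hA x

variable [InnerProductSpace ℝ E]

theorem contDiff_gaussianBump {m : WithTop ℕ∞} : ContDiff ℝ m (gaussianBump α A : E → ℝ) :=
  contDiff_const.mul (contDiff_const.mul (contDiff_norm_sq ℝ)).neg.exp

theorem hasFDerivAt_gaussianBump (y : E) :
    HasFDerivAt (gaussianBump α A) (innerSL ℝ (gaussianBumpGradient α A y)) y := by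
  refine (((((hasFDerivAt_id y).norm_sq.const_mul α).neg).exp).const_mul A).congr_fderiv ?_
  ext u
  simp [gaussianBumpGradient, gaussianBump]
  ring

theorem hasFDerivAt_gaussianBumpGradient (y : E) :
    HasFDerivAt (gaussianBumpGradient α A)
      ((4 * α ^ 2 * gaussianBump α A y) • rankOne ℝ y y -
        (2 * α * gaussianBump α A y) • .id ℝ E) y := by
  refine ((((hasFDerivAt_gaussianBump y).const_mul (2 * α)).neg).smul
    (hasFDerivAt_id y)).congr_fderiv ?_
  ext u
  simp [gaussianBumpGradient]
  module

-- The tangent line of `exp` at `-(α * ‖z‖ ^ 2)`, evaluated at `-(α * ‖x‖ ^ 2)`.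
theorem gaussianBump_add_inner_sub_le (hα : 0 ≤ α) (hA : 0 ≤ A) (x z : E) :
    gaussianBump α A z + ⟪gaussianBumpGradient α A z, x - z⟫_ℝ - α * A * ‖x - z‖ ^ 2 ≤
      gaussianBump α A x := by
  set t := 2 * ⟪z, x - z⟫_ℝ + ‖x - z‖ ^ 2 with ht
  have hx : ‖x‖ ^ 2 = ‖z‖ ^ 2 + t := by
    rw [ht, ← add_assoc, ← norm_add_sq_real, add_sub_cancel]
  have hexp : gaussianBump α A x = gaussianBump α A z * Real.exp (-(α * t)) := by
    rw [gaussianBump, gaussianBump, hx, mul_assoc, ← Real.exp_add]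
    ring_nf
  have hz0 : 0 ≤ gaussianBump α A z := gaussianBump_nonneg hA _
  have hinner : ⟪gaussianBumpGradient α A z, x - z⟫_ℝ =
      -(2 * α * gaussianBump α A z) * ⟪z, x - z⟫_ℝ := real_inner_smul_left _ _ _
  calc gaussianBump α A z + ⟪gaussianBumpGradient α A z, x - z⟫_ℝ - α * A * ‖x - z‖ ^ 2
      ≤ gaussianBump α A z + ⟪gaussianBumpGradient α A z, x - z⟫_ℝ
          - α * gaussianBump α A z * ‖x - z‖ ^ 2 := by
        gcongr
        exact gaussianBump_le hα hA z
    _ = gaussianBump α A z * (-(α * t) + 1) := by rw [hinner, ht]; ring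
    _ ≤ gaussianBump α A z * Real.exp (-(α * t)) := by gcongr; exact Real.add_one_le_exp _
    _ = gaussianBump α A x := hexp.symm

theorem norm_gaussianBumpGradient_sub_le (hα : 0 ≤ α) (hA : 0 ≤ A) {ρ : ℝ} {x y : E}
    (hx : x ∈ ball 0 ρ) (hy : y ∈ ball 0 ρ) :
    ‖gaussianBumpGradient α A x - gaussianBumpGradient α A y‖ ≤
      (4 * α ^ 2 * A * ρ ^ 2 + 2 * α * A) * ‖x - y‖ := by
  refine (convex_ball 0 ρ).norm_image_sub_le_of_norm_hasFDerivWithin_le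
    (fun z _ => (hasFDerivAt_gaussianBumpGradient z).hasFDerivWithinAt) (fun z hz => ?_) hy hx
  have h0 : 0 ≤ gaussianBump α A z := gaussianBump_nonneg hA _
  have hle : gaussianBump α A z ≤ A := gaussianBump_le hα hA z
  have hzρ : ‖z‖ ≤ ρ := (mem_ball_zero_iff.1 hz).le
  refine (norm_sub_le _ _).trans (add_le_add ?_ ?_)
  · rw [norm_smul, InnerProductSpace.norm_rankOne, Real.norm_of_nonneg (by positivity), ← sq]
    gcongr
  · rw [norm_smul, Real.norm_of_nonneg (by positivity)]
    refine (mul_le_of_le_one_right (by positivity) ContinuousLinearMap.norm_id_le).trans ?_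
    gcongr

end Gaussian

section GaussianContact

variable {E : Type*} [NormedAddCommGroup E] [InnerProductSpace ℝ E]
  {Ω : Set E} {v : E → ℝ} {x₀ p₀ s z : E} {α A R : ℝ}

theorem norm_lt_of_isMinOn_sub_gaussianBump (hball : closedBall 0 R ⊆ Ω)
    (h₀ : IsContactSlope 1 v Ω x₀ p₀) (hx₀ : ‖x₀‖ ≤ R)
    (hgap : ∀ y : E, ‖y‖ = R →
      gaussianBump α A y + (2 * R + 2 * R ^ 2) < gaussianBump α A x₀)
    (hs : ‖s - p₀‖ ≤ 1) (hz : z ∈ closedBall 0 R)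
    (hmin : IsMinOn (fun x => v x - (gaussianBump α A x + ⟪s, x⟫_ℝ)) (closedBall 0 R) z) :
    ‖z‖ < R := by
  refine (mem_closedBall_zero_iff.1 hz).lt_of_ne fun hzR => ?_
  have hle := isMinOn_iff.1 hmin x₀ (mem_closedBall_zero_iff.2 hx₀)
  have hcontact := h₀ z (hball hz)
  have hdist : ‖z - x₀‖ ≤ 2 * R := by linarith [norm_sub_le z x₀]
  have hslope : ⟪s - p₀, z - x₀⟫_ℝ ≤ 2 * R :=
    calc ⟪s - p₀, z - x₀⟫_ℝ ≤ ‖s - p₀‖ * ‖z - x₀‖ := real_inner_le_norm _ _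
      _ ≤ 1 * (2 * R) := by gcongr
      _ = 2 * R := one_mul _
  have hsq : ‖z - x₀‖ ^ 2 ≤ (2 * R) ^ 2 := by gcongr
  rw [inner_sub_left, inner_sub_right s] at hslope
  linarith [hgap z hzR]

theorem isContactSlope_closedBall_of_isMinOn_sub_gaussianBump (hα : 0 ≤ α) (hA : 0 ≤ A)
    (hmin : IsMinOn (fun x => v x - (gaussianBump α A x + ⟪s, x⟫_ℝ)) (closedBall 0 R) z) :
    IsContactSlope (2 * α * A) v (closedBall 0 R) z (s + gaussianBumpGradient α A z) := by
  intro x hx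
  have hle := isMinOn_iff.1 hmin x hx
  have hbump := gaussianBump_add_inner_sub_le hα hA x z
  rw [inner_add_left, inner_sub_right s]
  linarith

theorem isContactSlope_compl_closedBall_of_isMinOn_sub_gaussianBump (hR : 2 ≤ R)
    (h₀ : IsContactSlope 1 v Ω x₀ p₀) (hx₀ : ‖x₀‖ ≤ R) (hα : 0 ≤ α) (hA : 0 ≤ A)
    (hs : ‖s - p₀‖ ≤ 1) (hz : ‖z‖ ≤ 1 / 2)
    (hmin : IsMinOn (fun x => v x - (gaussianBump α A x + ⟪s, x⟫_ℝ)) (closedBall 0 R) z) :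
    IsContactSlope (15 + 2 * A + 2 * α * A) v (Ω \ closedBall 0 R) z
      (s + gaussianBumpGradient α A z) := by
  rintro x ⟨hx, hxR⟩
  rw [mem_closedBall_zero_iff, not_le] at hxR
  have hmin₀ := isMinOn_iff.1 hmin x₀ (mem_closedBall_zero_iff.2 hx₀)
  have hcontact := h₀ x hx
  set d := ‖x - z‖
  have hd : 3 / 2 ≤ d := by linarith [norm_sub_norm_le x z]
  have hdist : ‖x - x₀‖ ≤ 3 * d := by
    linarith [norm_sub_le_norm_sub_add_norm_sub x z x₀, norm_sub_le z x₀, norm_sub_norm_le x z]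
  have hslope : ⟪s - p₀, x - x₀⟫_ℝ ≤ 3 * d :=
    calc ⟪s - p₀, x - x₀⟫_ℝ ≤ ‖s - p₀‖ * ‖x - x₀‖ := real_inner_le_norm _ _
      _ ≤ 1 * (3 * d) := by gcongr
      _ = 3 * d := one_mul _
  have hgrad : ⟪gaussianBumpGradient α A z, x - z⟫_ℝ ≤ α * A * d :=
    calc ⟪gaussianBumpGradient α A z, x - z⟫_ℝ ≤ ‖gaussianBumpGradient α A z‖ * d :=
          real_inner_le_norm _ _
      _ ≤ 2 * α * A * (1 / 2) * d := by
        gcongr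
        exact (norm_gaussianBumpGradient_le hα hA z).trans (by gcongr)
      _ = α * A * d := by ring
  have hsq : ‖x - x₀‖ ^ 2 ≤ (3 * d) ^ 2 := by gcongr
  have hd2 : d ≤ d ^ 2 := le_self_pow₀ (by linarith) two_ne_zero
  have hAd : A ≤ A * d ^ 2 := le_mul_of_one_le_right hA (by nlinarith)
  have hαAd : α * A * d ≤ α * A * d ^ 2 := by gcongr
  have hz_le := gaussianBump_le hα hA z
  have hx₀_nonneg : 0 ≤ gaussianBump α A x₀ := gaussianBump_nonneg hA _
  rw [inner_sub_left, inner_sub_right s] at hslope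
  rw [inner_add_left, inner_sub_right s]
  linarith

theorem isContactSlope_of_isMinOn_sub_gaussianBump (hR : 2 ≤ R)
    (h₀ : IsContactSlope 1 v Ω x₀ p₀) (hx₀ : ‖x₀‖ ≤ R) (hα : 0 ≤ α) (hA : 0 ≤ A)
    (hs : ‖s - p₀‖ ≤ 1) (hz : ‖z‖ ≤ 1 / 2)
    (hmin : IsMinOn (fun x => v x - (gaussianBump α A x + ⟪s, x⟫_ℝ)) (closedBall 0 R) z) :
    IsContactSlope (15 + 2 * A + 2 * α * A) v Ω z (s + gaussianBumpGradient α A z) := by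
  intro x hx
  by_cases hxR : x ∈ closedBall 0 R
  · exact (isContactSlope_closedBall_of_isMinOn_sub_gaussianBump hα hA hmin).mono
      (by linarith) subset_rfl x hxR
  · exact isContactSlope_compl_closedBall_of_isMinOn_sub_gaussianBump hR h₀ hx₀ hα hA hs hz hmin
      x ⟨hx, hxR⟩

end GaussianContact

namespace ViscSupersol

variable {n : ℕ} {lam Lam κ M α A R ρ : ℝ} {Ω : Set (Euc n)} {v : Euc n → ℝ}
  {x₀ p₀ s t y z : Euc n}

theorem norm_lt_of_isLocalMin_sub_gaussianBump (hv : ViscSupersol lam Lam Ω v)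
    (hLam : lam ≤ Lam) (hα : 0 < α) (hA : 0 < A) (hρ : n * Lam < lam * (2 * α * ρ ^ 2))
    (hlam : 0 < lam) (hρ0 : 0 ≤ ρ) (hz : z ∈ Ω)
    (hmin : IsLocalMin (fun x => v x - (gaussianBump α A x + ⟪s, x⟫_ℝ)) z) : ‖z‖ < ρ := by
  by_contra! hle
  have hψ : 0 < gaussianBump α A z := gaussianBump_pos hA z
  refine hv.not_isLocalMin_sub hLam hz
    (contDiff_gaussianBump.add (contDiff_const.inner ℝ contDiff_id))
    (fun y => ((hasFDerivAt_gaussianBump y).add (innerSL ℝ s).hasFDerivAt).congr_fderiv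
      (map_add (innerSL ℝ) _ _).symm)
    ((hasFDerivAt_gaussianBumpGradient z).add_const s) (by positivity) (by positivity) ?_ hmin
  calc n * Lam * (2 * α * gaussianBump α A z)
      < lam * (2 * α * ρ ^ 2) * (2 * α * gaussianBump α A z) := by gcongr
    _ = lam * (4 * α ^ 2 * gaussianBump α A z) * ρ ^ 2 := by ring
    _ ≤ lam * (4 * α ^ 2 * gaussianBump α A z) * ‖z‖ ^ 2 := by gcongr

theorem exists_isContactSlope_add_gradient (hv : ViscSupersol lam Lam (ball 0 R) v)
    (hlsc : LowerSemicontinuousOn v (closedBall 0 R)) (hball : closedBall 0 R ⊆ Ω)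
    (hlam : 0 < lam) (hLam : lam ≤ Lam) (hR : 2 ≤ R) (hα : 0 < α)
    (hκα : 2 * (n * Lam) < lam * α) (hA : 0 < A) (h₀ : IsContactSlope 1 v Ω x₀ p₀)
    (hx₀ : ‖x₀‖ ≤ R)
    (hgap : ∀ y : Euc n, ‖y‖ = R →
      gaussianBump α A y + (2 * R + 2 * R ^ 2) < gaussianBump α A x₀)
    (hs : ‖s - p₀‖ ≤ 1) :
    ∃ z ∈ ball (0 : Euc n) (1 / 2),
      IsContactSlope (15 + 2 * A + 2 * α * A) v Ω z (s + gaussianBumpGradient α A z) := by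
  obtain ⟨z, hzR, hmin⟩ := exists_isMinOn_sub (isCompact_closedBall 0 R)
    ⟨x₀, mem_closedBall_zero_iff.2 hx₀⟩ hlsc
    ((contDiff_gaussianBump (α := α) (A := A) (m := 0)).continuous.add (innerSL ℝ s).continuous)
  have hzball : z ∈ ball 0 R :=
    mem_ball_zero_iff.2 (norm_lt_of_isMinOn_sub_gaussianBump hball h₀ hx₀ hgap hs hzR hmin)
  have hz : ‖z‖ < 1 / 2 :=
    hv.norm_lt_of_isLocalMin_sub_gaussianBump hLam hα hA (by linarith) hlam (by norm_num) hzball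
      (hmin.isLocalMin (closedBall_mem_nhds_of_mem hzball))
  exact ⟨z, mem_ball_zero_iff.2 hz,
    isContactSlope_of_isMinOn_sub_gaussianBump hR h₀ hx₀ hα.le hA.le hs hz.le hmin⟩

theorem norm_sub_le_of_isContactSlope_add_gradient (hv : ViscSupersol lam Lam (ball 0 R) v)
    (hlsc : LowerSemicontinuousOn v (ball 0 R)) (hlam : 0 < lam) (hLam : lam ≤ Lam)
    (hκ : n * Lam ≤ lam * κ) (hκ1 : 1 ≤ κ) (hR : 2 ≤ R) (hα : 0 ≤ α) (hA : 0 ≤ A) (hM : 0 ≤ M)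
    (hy : y ∈ ball 0 (1 / 2)) (hz : z ∈ ball 0 (1 / 2)) (hyz : ‖y - z‖ < (8 * κ)⁻¹)
    (hs : IsContactSlope M v (ball 0 R) y (s + gaussianBumpGradient α A y))
    (ht : IsContactSlope M v (ball 0 R) z (t + gaussianBumpGradient α A z)) :
    ‖s - t‖ ≤ (12 * (κ * M) + M + (α ^ 2 * A + 2 * α * A)) * ‖y - z‖ := by
  have hsub : closedBall z (8 * κ * (8 * κ)⁻¹) ⊆ ball 0 R := by
    refine closedBall_subset_ball' ?_
    rw [mul_inv_cancel₀ (by positivity)]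
    linarith [mem_ball.1 hz]
  have hy' : y ∈ ball 0 R := ball_subset_ball (by linarith) hy
  have hvertex := hv.norm_vertex_sub_le hlsc hlam hLam hκ hκ1 hM hy' ht hs hyz hsub
  have hgrad := norm_gaussianBumpGradient_sub_le hα hA hy hz
  calc ‖s - t‖
      = ‖(s + gaussianBumpGradient α A y + M • y - (t + gaussianBumpGradient α A z + M • z))
          - M • (y - z) - (gaussianBumpGradient α A y - gaussianBumpGradient α A z)‖ := by
        congr 1
        module
    _ ≤ 12 * (κ * M) * ‖y - z‖ + M * ‖y - z‖
          + (4 * α ^ 2 * A * (1 / 2) ^ 2 + 2 * α * A) * ‖y - z‖ := by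
        refine (norm_sub_le _ _).trans (add_le_add ((norm_sub_le _ _).trans ?_) hgrad)
        exact add_le_add hvertex (norm_smul_of_nonneg hM _).le
    _ = _ := by ring

theorem dist_le_of_isContactSlope_add_gradient (hv : ViscSupersol lam Lam (ball 0 R) v)
    (hlsc : LowerSemicontinuousOn v (ball 0 R)) (hlam : 0 < lam) (hLam : lam ≤ Lam)
    (hκ : n * Lam ≤ lam * κ) (hκ1 : 1 ≤ κ) (hR : 2 ≤ R) (hα : 0 ≤ α) (hA : 0 ≤ A) (hM : 0 ≤ M)
    (hs₀ : s ∈ ball p₀ 1) (ht₀ : t ∈ ball p₀ 1)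
    (hy : y ∈ ball 0 (1 / 2)) (hz : z ∈ ball 0 (1 / 2))
    (hs : IsContactSlope M v (ball 0 R) y (s + gaussianBumpGradient α A y))
    (ht : IsContactSlope M v (ball 0 R) z (t + gaussianBumpGradient α A z)) :
    dist s t ≤ (12 * (κ * M) + M + (α ^ 2 * A + 2 * α * A) + 16 * κ) * dist y z := by
  rw [add_mul]
  rcases lt_or_ge ‖y - z‖ (8 * κ)⁻¹ with hnear | hfar
  · refine le_add_of_le_of_nonneg ?_ (by positivity)
    rw [dist_eq_norm, dist_eq_norm]
    exact hv.norm_sub_le_of_isContactSlope_add_gradient hlsc hlam hLam hκ hκ1 hR hα hA hM hy hz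
      hnear hs ht
  · refine le_add_of_nonneg_of_le (by positivity) ?_
    calc dist s t ≤ 2 := by
          linarith [dist_triangle_right s t p₀, mem_ball.1 hs₀, mem_ball.1 ht₀]
      _ = 16 * κ * (8 * κ)⁻¹ := by field_simp; norm_num
      _ ≤ 16 * κ * dist y z := by rw [dist_eq_norm]; gcongr

theorem exists_antilipschitz_contact_map (n : ℕ) (hlam : 0 < lam) (hLam : lam ≤ Lam)
    (hR : 2 ≤ R) :
    ∃ M > 1, ∃ K : ℝ≥0, ∀ (Ω : Set (Euc n)) (v : Euc n → ℝ) (x₀ p₀ : Euc n),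
      closedBall 0 R ⊆ Ω → LowerSemicontinuousOn v (closedBall 0 R) →
      ViscSupersol lam Lam (ball 0 R) v → ‖x₀‖ ≤ 3 / 4 * R → IsContactSlope 1 v Ω x₀ p₀ →
      ∃ f : Euc n → Euc n, MapsTo f (ball p₀ 1) (Gm M v Ω ∩ ball 0 (1 / 2)) ∧
        AntilipschitzWith K ((ball p₀ 1).domRestrict f) := by
  obtain ⟨κ, hκ1, hκ⟩ : ∃ κ : ℝ, 1 ≤ κ ∧ n * Lam ≤ lam * κ :=
    ⟨max 1 (n * Lam / lam), le_max_left _ _, (div_le_iff₀' hlam).1 (le_max_right _ _)⟩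
  obtain ⟨α, hα, hκα⟩ : ∃ α : ℝ, 0 < α ∧ 2 * (n * Lam) < lam * α :=
    ⟨2 * κ + 1, by positivity, by linarith⟩
  obtain ⟨A, hA, hgap⟩ := exists_gaussianBump_gap (E := Euc n) hα (r := 3 / 4 * R) (R := R)
    (by positivity) (by linarith) (2 * R + 2 * R ^ 2)
  set M := 15 + 2 * A + 2 * α * A
  have hM : 1 < M := by
    have : 0 < α * A := by positivity
    linarith
  set L := 12 * (κ * M) + M + (α ^ 2 * A + 2 * α * A) + 16 * κ
  refine ⟨M, hM, L.toNNReal, fun Ω v x₀ p₀ hball hlsc hv hx₀ h₀ => ?_⟩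
  have hcontact : ∀ s ∈ ball p₀ 1, ∃ z ∈ ball (0 : Euc n) (1 / 2),
      IsContactSlope M v Ω z (s + gaussianBumpGradient α A z) := fun s hs =>
    hv.exists_isContactSlope_add_gradient hlsc hball hlam hLam hR hα hκα hA h₀ (by linarith)
      (fun y => hgap x₀ y hx₀) (mem_ball_iff_norm.1 hs).le
  choose! f hf hslope using hcontact
  have hballΩ : ball 0 R ⊆ Ω := ball_subset_closedBall.trans hball
  have hsub : ball 0 (1 / 2) ⊆ Ω := (ball_subset_ball (by linarith)).trans hballΩ
  refine ⟨f, fun s hs => ⟨⟨hsub (hf s hs), _, hslope s hs⟩, hf s hs⟩,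
    .of_le_mul_dist fun ⟨s, hs⟩ ⟨t, ht⟩ => ?_⟩
  rw [Real.coe_toNNReal _ (by positivity)]
  exact hv.dist_le_of_isContactSlope_add_gradient (hlsc.mono ball_subset_closedBall) hlam hLam hκ
    hκ1 hR hα.le hA.le (by positivity) hs ht (hf s hs) (hf t ht)
    ((hslope s hs).mono le_rfl hballΩ) ((hslope t ht).mono le_rfl hballΩ)

end ViscSupersol

section Measure

theorem addHaar_le_mul_addHaar_image {E : Type*} [NormedAddCommGroup E] [NormedSpace ℝ E]
    [FiniteDimensional ℝ E] [MeasurableSpace E] [BorelSpace E] (μ : Measure E)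
    [μ.IsAddHaarMeasure] {K : ℝ≥0} {f : E → E} {s : Set E}
    (hf : AntilipschitzWith K (s.domRestrict f)) :
    μ s ≤ (K : ℝ≥0∞) ^ Module.finrank ℝ E * μ (f '' s) := by
  have hd : (0 : ℝ) ≤ Module.finrank ℝ E := Nat.cast_nonneg _
  have hle := hf.le_hausdorffMeasure_image hd univ
  rw [← isometry_subtype_coe.hausdorffMeasure_image (.inl hd), image_univ, image_univ,
    Subtype.range_coe, range_domRestrict, ENNReal.rpow_natCast] at hle
  have := isAddHaarMeasure_hausdorffMeasure (E := E)
  rw [Measure.isAddLeftInvariant_eq_smul μ (μH[Module.finrank ℝ E])]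
  simp only [Measure.smul_apply, ENNReal.smul_def, smul_eq_mul]
  rw [mul_left_comm]
  gcongr

theorem exists_ofReal_one_sub_le {c : ℝ≥0∞} (hc : 0 < c) :
    ∃ σ ∈ Ioo (0 : ℝ) 1, ENNReal.ofReal (1 - σ) ≤ c := by
  obtain ⟨x, -, hx0, hx⟩ := ENNReal.lt_iff_exists_real_btwn.1 (lt_min hc one_pos)
  obtain ⟨hxc, hx1⟩ := lt_min_iff.1 hx
  rw [ENNReal.ofReal_pos] at hx0
  rw [ENNReal.ofReal_lt_one] at hx1
  exact ⟨1 - x, ⟨by linarith, by linarith⟩, by simpa using hxc.le⟩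

end Measure

section Cube

variable {n : ℕ} {r : ℝ} {x y : Euc n}

theorem ball_subset_cube : ball x (r / 2) ⊆ cube r x := fun y hy i =>
  (PiLp.norm_apply_le (y - x) i).trans_lt (mem_ball_iff_norm.1 hy)

theorem norm_sub_le_of_mem_cube (hr : 0 ≤ r) (hy : y ∈ cube r x) : ‖y - x‖ ≤ √n * (r / 2) := by
  rw [EuclideanSpace.norm_eq]
  calc √(∑ i, ‖(y - x) i‖ ^ 2) ≤ √(∑ _i : Fin n, (r / 2) ^ 2) := by
        gcongr with i
        exact (hy i).le
    _ = √n * (r / 2) := by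
      rw [Finset.sum_const, Finset.card_univ, Fintype.card_fin, nsmul_eq_mul,
        Real.sqrt_mul (by positivity), Real.sqrt_sq (by positivity)]

end Cube

theorem stmt_3_general (n : ℕ) (hn : 1 ≤ n) (lam Lam : ℝ) (hlam : 0 < lam) (hLam : lam ≤ Lam) :
    ∃ M : ℝ, 1 < M ∧ ∃ σ ∈ Set.Ioo (0 : ℝ) 1,
      ∀ Ω : Set (Euc n), closedBall 0 (2 * Real.sqrt n) ⊆ Ω →
        ∀ v : Euc n → ℝ, LowerSemicontinuousOn v (closedBall 0 (2 * Real.sqrt n)) →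
          ViscSupersol lam Lam (ball 0 (2 * Real.sqrt n)) v →
          (Gm 1 v Ω ∩ cube 3 0).Nonempty →
          ENNReal.ofReal (1 - σ) ≤ volume (Gm M v Ω ∩ cube 1 0) := by
  have hR : 2 ≤ 2 * √n := by
    have : 1 ≤ √n := Real.one_le_sqrt.2 (by exact_mod_cast hn)
    linarith
  obtain ⟨M, hM, K, hmap⟩ := ViscSupersol.exists_antilipschitz_contact_map n hlam hLam hR
  obtain ⟨σ, hσ, hσle⟩ := exists_ofReal_one_sub_le (c := volume (ball (0 : Euc n) 1) / K ^ n)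
    (ENNReal.div_pos (measure_ball_pos _ _ one_pos).ne' (by finiteness))
  refine ⟨M, hM, σ, hσ, fun Ω hball v hlsc hv => ?_⟩
  rintro ⟨x₀, ⟨-, p₀, h₀⟩, hx₀⟩
  have hx₀R : ‖x₀‖ ≤ 3 / 4 * (2 * √n) := by
    have := norm_sub_le_of_mem_cube (by norm_num) hx₀
    rw [sub_zero] at this
    linarith
  obtain ⟨f, hf, hanti⟩ := hmap Ω v x₀ p₀ hball hlsc hv hx₀R h₀
  have hmeas := addHaar_le_mul_addHaar_image volume hanti
  rw [Measure.addHaar_ball_center, finrank_euclideanSpace_fin] at hmeas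
  calc ENNReal.ofReal (1 - σ) ≤ volume (ball (0 : Euc n) 1) / K ^ n := hσle
    _ ≤ volume (f '' ball p₀ 1) := ENNReal.div_le_of_le_mul' hmeas
    _ ≤ volume (Gm M v Ω ∩ cube 1 0) :=
      measure_mono (hf.image_subset.trans (inter_subset_inter_right _ ball_subset_cube))

/-- measure and localization estimate (abstract form): existence of
M > 1 and σ ∈ (0,1) depending only on n, λ, Λ. -/
theorem stmt_3 (n : ℕ) (hn : 2 ≤ n) (lam Lam : ℝ) (hlam : 0 < lam) (hLam : lam ≤ Lam) :
    ∃ M : ℝ, 1 < M ∧ ∃ σ ∈ Set.Ioo (0 : ℝ) 1,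
      ∀ Ω : Set (Euc n), IsOpen Ω → closedBall 0 (2 * Real.sqrt n) ⊆ Ω →
        ∀ v : Euc n → ℝ, ContinuousOn v Ω → ViscSupersol lam Lam Ω v →
          (Gm 1 v Ω ∩ cube 3 0).Nonempty →
          ENNReal.ofReal (1 - σ) ≤ volume (Gm M v Ω ∩ cube 1 0) := by
  obtain ⟨M, hM, σ, hσ, hmeas⟩ := stmt_3_general n (one_le_two.trans hn) lam Lam hlam hLam
  exact ⟨M, hM, σ, hσ, fun Ω _ hball v hcont hv => hmeas Ω hball v
    (hcont.mono hball).lowerSemicontinuousOn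
    (hv.mono isOpen_ball (ball_subset_closedBall.trans hball))⟩
end
end

section
/- Let n ≥ 2 be an integer and 0 < λ ≤ Λ real constants. Let Ω ⊆ ℝⁿ be an open set containing the closure of Q₂, and let v : Ω → ℝ be a continuous viscosity supersolution of M⁻_{λ,Λ}(D²v) ≤ 0 in Ω. If G⁻_{1/n}(v,Ω) ∩ Q_{1/(4√n)} ≠ ∅, then |G⁻₃₂(v,Ω) ∩ Q₁| ≥ (1−σ)·|Q₁|, where σ := 1 − (λ/(λ+(n−1)Λ))^n · (1/(4√n))^n. -/
open MeasureTheory Metric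
open scoped InnerProductSpace ENNReal

noncomputable section

/-!
Adding `K / 2 * ‖x‖ ^ 2` to `v` turns contact with concave paraboloids of opening `K` into contact
with affine functions, so `Gm K v Ω` is a set of contact points and the proof compares its volume
with that of the set of contact slopes.

*Many slopes.* One contact point for the opening `k`, with slope `q₀`, gives a contact point for the
opening `K` with slope `q₀ + (K - k) • c` for every `c` near the centre: sliding a paraboloid of
opening `K - k` centred at `c` from below, the first contact occurs near that centre.

*Few slopes per point.* Let `f` be the supremum of the supporting affine functions. The gradient `p`
of its Moreau envelope is Lipschitz and maps the points whose proximal point is a contact point onto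
the contact slopes. Where `p` is differentiable, its derivative `T ≥ 0` is, up to a small multiple
of `‖x‖ ^ 2`, the Hessian of a paraboloid touching `v + K / 2 * ‖x‖ ^ 2` from below at the proximal
point. The Pucci inequality then gives `lam * trace T ≤ n * (K * Lam)`, and AM-GM gives
`det T ≤ (K * Lam / lam) ^ n`. The area formula bounds the volume of the slopes by that constant
times the volume of a neighbourhood of the contact set, which shrinks to the contact set as the
Moreau parameter tends to infinity.

Bounding `det T` through the trace rather than one eigenvalue at a time is what gives `lam / Lam` in
place of the smaller `lam / (lam + (n - 1) * Lam)`.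
-/

section MoreauEnvelope

open Set Filter
open scoped Topology NNReal

lemma exists_isMinOn_add_sq {E : Type*} [NormedAddCommGroup E] [ProperSpace E] {f : E → ℝ}
    {R : ℝ≥0} (hf : LipschitzWith R f) {τ : ℝ} (hτ : 0 < τ) (x : E) :
    ∃ z, IsMinOn (fun w ↦ f w + τ / 2 * ‖x - w‖ ^ 2) univ z := by
  have hcont : Continuous fun w ↦ f w + τ / 2 * ‖x - w‖ ^ 2 := by
    have := hf.continuous
    fun_prop
  have hfar : ∀ᶠ w in cocompact E, f x + τ / 2 * ‖x - x‖ ^ 2 ≤ f w + τ / 2 * ‖x - w‖ ^ 2 := by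
    filter_upwards [(isCompact_closedBall x (2 * R / τ)).compl_mem_cocompact] with w hw
    have hlip := hf.le_add_mul x w
    have hRw : R ≤ τ / 2 * ‖x - w‖ := by
      rw [mem_compl_iff, mem_closedBall', dist_eq_norm, not_le, div_lt_iff₀ hτ] at hw
      linarith
    rw [dist_eq_norm] at hlip
    rw [sub_self, norm_zero]
    nlinarith [norm_nonneg (x - w)]
  obtain ⟨z, hz⟩ := hcont.exists_forall_le' x hfar
  exact ⟨z, isMinOn_univ_iff.2 hz⟩

variable {E : Type*} [NormedAddCommGroup E] [InnerProductSpace ℝ E]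

/-- `q` is a subgradient at `z` of the restriction of `f` to `s`; `z ∈ s` is not required. -/
def IsSubgradientOn (f : E → ℝ) (s : Set E) (z q : E) : Prop :=
  ∀ w ∈ s, f z + ⟪q, w - z⟫_ℝ ≤ f w

lemma IsSubgradientOn.inner_sub_nonneg {f : E → ℝ} {s : Set E} {z₁ q₁ z₂ q₂ : E}
    (h₁ : IsSubgradientOn f s z₁ q₁) (h₂ : IsSubgradientOn f s z₂ q₂) (hz₁ : z₁ ∈ s)
    (hz₂ : z₂ ∈ s) : 0 ≤ ⟪q₁ - q₂, z₁ - z₂⟫_ℝ := by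
  have h₁₂ := h₁ z₂ hz₂
  have h₂₁ := h₂ z₁ hz₁
  rw [← neg_sub z₁ z₂, inner_neg_right] at h₁₂
  rw [inner_sub_left]
  linarith

lemma IsSubgradientOn.norm_le {f : E → ℝ} {R : ℝ≥0} {z q : E} (h : IsSubgradientOn f univ z q)
    (hf : LipschitzWith R f) : ‖q‖ ≤ R := by
  have hsub := h (z + q) (mem_univ _)
  have hlip := hf.le_add_mul (z + q) z
  rw [add_sub_cancel_left, real_inner_self_eq_norm_sq] at hsub
  rw [dist_eq_norm, add_sub_cancel_left] at hlip
  nlinarith [norm_nonneg q, R.coe_nonneg]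

lemma IsSubgradientOn.of_isMinOn_add_sq {f : E → ℝ} (hf : ConvexOn ℝ univ f) {τ : ℝ} {x z : E}
    (hz : IsMinOn (fun w ↦ f w + τ / 2 * ‖x - w‖ ^ 2) univ z) :
    IsSubgradientOn f univ z (τ • (x - z)) := by
  intro w _
  have on_segment : ∀ s ∈ Ioc (0 : ℝ) 1,
      f z + ⟪τ • (x - z), w - z⟫_ℝ ≤ f w + s * (τ / 2 * ‖w - z‖ ^ 2) := by
    intro s ⟨hs₀, hs₁⟩
    have hconv : f ((1 - s) • z + s • w) ≤ (1 - s) * f z + s * f w :=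
      hf.2 (mem_univ z) (mem_univ w) (sub_nonneg.2 hs₁) hs₀.le (sub_add_cancel 1 s)
    have hmin : f z + τ / 2 * ‖x - z‖ ^ 2 ≤
        f ((1 - s) • z + s • w) + τ / 2 * ‖x - ((1 - s) • z + s • w)‖ ^ 2 := hz (mem_univ _)
    rw [show x - ((1 - s) • z + s • w) = (x - z) - s • (w - z) by module,
      norm_sub_sq_real (x - z), real_inner_smul_right, norm_smul, mul_pow, Real.norm_eq_abs,
      sq_abs] at hmin
    rw [real_inner_smul_left]
    refine le_of_mul_le_mul_left ?_ hs₀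
    linarith
  have htendsto : Tendsto (fun s : ℝ ↦ f w + s * (τ / 2 * ‖w - z‖ ^ 2)) (𝓝[>] 0) (𝓝 (f w)) := by
    refine Tendsto.mono_left ?_ nhdsWithin_le_nhds
    exact Continuous.tendsto' (by fun_prop) _ _ (by simp)
  exact ge_of_tendsto htendsto (eventually_of_mem (Ioc_mem_nhdsGT one_pos) on_segment)

/-- `z` is the proximal map of `τ⁻¹ f`, i.e. the resolvent `(1 + τ⁻¹ ∂f)⁻¹`, characterised by its
optimality condition. -/
def IsProximalMap (f : E → ℝ) (τ : ℝ) (z : E → E) : Prop :=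
  ∀ x, IsSubgradientOn f univ (z x) (τ • (x - z x))

lemma exists_isProximalMap [ProperSpace E] {f : E → ℝ} (hconv : ConvexOn ℝ univ f) {R : ℝ≥0}
    (hlip : LipschitzWith R f) {τ : ℝ} (hτ : 0 < τ) : ∃ z, IsProximalMap f τ z := by
  choose z hz using exists_isMinOn_add_sq hlip hτ
  exact ⟨z, fun x ↦ .of_isMinOn_add_sq hconv (hz x)⟩

/-- The Moreau envelope `x ↦ min_w (f w + τ / 2 * ‖x - w‖ ^ 2)`, written in terms of the proximal
map `z`, at whose values the minimum is attained. -/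
def moreauEnvelope (f : E → ℝ) (τ : ℝ) (z : E → E) (x : E) : ℝ :=
  f (z x) + τ / 2 * ‖x - z x‖ ^ 2

/-- The gradient of the Moreau envelope in terms of the proximal map `z` (the Yosida approximation
of the subdifferential). -/
def moreauGradient (τ : ℝ) (z : E → E) (x : E) : E := τ • (x - z x)

namespace IsProximalMap

variable {f : E → ℝ} {τ : ℝ} {z : E → E}

lemma moreauEnvelope_le (hz : IsProximalMap f τ z) (hτ : 0 < τ) (x w : E) :
    moreauEnvelope f τ z x ≤ f w + τ / 2 * ‖x - w‖ ^ 2 := by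
  have hsub := hz x w (mem_univ w)
  rw [real_inner_smul_left] at hsub
  rw [moreauEnvelope, ← sub_sub_sub_cancel_right x w (z x), norm_sub_sq_real (x - z x)]
  have : 0 ≤ τ / 2 * ‖w - z x‖ ^ 2 := by positivity
  linarith

lemma norm_moreauGradient_sub_sq_le (hz : IsProximalMap f τ z) (hτ : 0 < τ) (x y : E) :
    ‖moreauGradient τ z x - moreauGradient τ z y‖ ^ 2 ≤
      τ * ⟪moreauGradient τ z x - moreauGradient τ z y, x - y⟫_ℝ := by
  have hmono := (hz x).inner_sub_nonneg (hz y) (mem_univ _) (mem_univ _)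
  set d := moreauGradient τ z x - moreauGradient τ z y with hd
  have hsplit : τ • (x - y) = τ • (z x - z y) + d := by
    rw [hd, moreauGradient, moreauGradient]
    module
  rw [← real_inner_smul_right, hsplit, inner_add_right, real_inner_smul_right,
    real_inner_self_eq_norm_sq]
  exact le_add_of_nonneg_left (mul_nonneg hτ.le hmono)

lemma inner_moreauGradient_sub_nonneg (hz : IsProximalMap f τ z) (hτ : 0 < τ) (x y : E) :
    0 ≤ ⟪moreauGradient τ z x - moreauGradient τ z y, x - y⟫_ℝ :=
  nonneg_of_mul_nonneg_right ((sq_nonneg _).trans (hz.norm_moreauGradient_sub_sq_le hτ x y)) hτ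

lemma lipschitzWith_moreauGradient (hz : IsProximalMap f τ z) (hτ : 0 < τ) :
    LipschitzWith τ.toNNReal (moreauGradient τ z) := by
  refine LipschitzWith.of_dist_le_mul fun x y ↦ ?_
  rw [dist_eq_norm, dist_eq_norm, Real.coe_toNNReal _ hτ.le]
  have hcs := real_inner_le_norm (moreauGradient τ z x - moreauGradient τ z y) (x - y)
  have hcoercive := hz.norm_moreauGradient_sub_sq_le hτ x y
  rcases (norm_nonneg (moreauGradient τ z x - moreauGradient τ z y)).eq_or_lt with h₀ | hpos
  · rw [← h₀]
    positivity
  · refine le_of_mul_le_mul_left ?_ hpos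
    nlinarith

lemma apply_add_inv_smul (hz : IsProximalMap f τ z) (hτ : 0 < τ) {w q : E}
    (hq : IsSubgradientOn f univ w q) : z (w + τ⁻¹ • q) = w := by
  have hmono := (hz (w + τ⁻¹ • q)).inner_sub_nonneg hq (mem_univ _) (mem_univ _)
  set y := z (w + τ⁻¹ • q)
  have hgrad : τ • (w + τ⁻¹ • q - y) = q - τ • (y - w) := by
    rw [smul_sub, smul_add, smul_inv_smul₀ hτ.ne']
    module
  rw [hgrad, sub_sub_cancel_left, inner_neg_left, real_inner_smul_left,
    real_inner_self_eq_norm_sq] at hmono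
  rw [← sub_eq_zero, ← norm_eq_zero, ← sq_eq_zero_iff]
  nlinarith [sq_nonneg ‖y - w‖]

lemma moreauGradient_add_inv_smul (hz : IsProximalMap f τ z) (hτ : 0 < τ) {w q : E}
    (hq : IsSubgradientOn f univ w q) : moreauGradient τ z (w + τ⁻¹ • q) = q := by
  rw [moreauGradient, hz.apply_add_inv_smul hτ hq, add_sub_cancel_left, smul_inv_smul₀ hτ.ne']

lemma continuous (hz : IsProximalMap f τ z) (hτ : 0 < τ) : Continuous z := by
  have hz_eq : z = fun x ↦ x - τ⁻¹ • moreauGradient τ z x := funext fun x ↦ by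
    rw [moreauGradient, inv_smul_smul₀ hτ.ne', sub_sub_cancel]
  rw [hz_eq]
  exact continuous_id.sub ((hz.lipschitzWith_moreauGradient hτ).continuous.const_smul _)

lemma dist_apply_le (hz : IsProximalMap f τ z) (hτ : 0 < τ) {R : ℝ≥0} (hf : LipschitzWith R f)
    (x : E) : dist x (z x) ≤ R / τ := by
  have hnorm := (hz x).norm_le hf
  rwa [norm_smul, Real.norm_of_nonneg hτ.le, ← dist_eq_norm, ← le_div_iff₀' hτ] at hnorm

lemma moreauEnvelope_sub_le (hz : IsProximalMap f τ z) (hτ : 0 < τ) (x y : E) :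
    moreauEnvelope f τ z y - moreauEnvelope f τ z x ≤
      ⟪moreauGradient τ z x, y - x⟫_ℝ + τ / 2 * ‖y - x‖ ^ 2 := by
  have hle := hz.moreauEnvelope_le hτ y (z x)
  rw [← sub_add_sub_cancel y x (z x), norm_add_sq_real, real_inner_comm] at hle
  rw [moreauEnvelope.eq_def f τ z x, moreauGradient, real_inner_smul_left]
  linarith

lemma inner_moreauGradient_le_moreauEnvelope_sub (hz : IsProximalMap f τ z) (hτ : 0 < τ)
    (x y : E) :
    ⟪moreauGradient τ z x, y - x⟫_ℝ ≤ moreauEnvelope f τ z y - moreauEnvelope f τ z x := by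
  have hsub := hz x (z y) (mem_univ _)
  have hsq : 0 ≤ τ / 2 * ‖(y - z y) - (x - z x)‖ ^ 2 := by positivity
  rw [norm_sub_sq_real] at hsq
  rw [show z y - z x = (y - x) + (x - z x) - (y - z y) by abel, real_inner_smul_left,
    inner_sub_right, inner_add_right, real_inner_self_eq_norm_sq, real_inner_comm (y - z y)] at hsub
  rw [moreauEnvelope, moreauEnvelope, moreauGradient, real_inner_smul_left]
  linarith

lemma hasGradientAt_moreauEnvelope [CompleteSpace E] (hz : IsProximalMap f τ z) (hτ : 0 < τ)
    (x : E) : HasGradientAt (moreauEnvelope f τ z) (moreauGradient τ z x) x := by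
  rw [hasGradientAt_iff_isLittleO]
  refine Asymptotics.IsBigO.trans_isLittleO (g := fun y ↦ ‖y - x‖ ^ 2) ?_
    ((Asymptotics.isLittleO_norm_pow_id one_lt_two).comp_tendsto
      (tendsto_sub_nhds_zero_iff.2 tendsto_id))
  refine .of_bound (τ / 2) (.of_forall fun y ↦ ?_)
  have hlower := hz.inner_moreauGradient_le_moreauEnvelope_sub hτ x y
  have hupper := hz.moreauEnvelope_sub_le hτ x y
  rw [norm_pow, norm_norm, Real.norm_of_nonneg (sub_nonneg.2 hlower)]
  linarith

end IsProximalMap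

end MoreauEnvelope

section SupportEnvelope

open Set
open scoped NNReal

lemma convexOn_ciSup {ι E : Type*} [Nonempty ι] [AddCommMonoid E] [Module ℝ E] {s : Set E}
    {f : ι → E → ℝ} (hf : ∀ i, ConvexOn ℝ s (f i)) (hbdd : ∀ x, BddAbove (range (f · x))) :
    ConvexOn ℝ s fun x ↦ ⨆ i, f i x := by
  refine ⟨(hf (Classical.arbitrary ι)).1, fun x hx y hy a b ha hb hab ↦ ciSup_le fun i ↦ ?_⟩
  calc f i (a • x + b • y) ≤ a • f i x + b • f i y := (hf i).2 hx hy ha hb hab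
    _ ≤ a • (⨆ j, f j x) + b • ⨆ j, f j y := by
      gcongr
      exacts [le_ciSup (hbdd x) i, le_ciSup (hbdd y) i]

lemma lipschitzWith_ciSup {ι α : Type*} [Nonempty ι] [PseudoMetricSpace α] {K : ℝ≥0}
    {f : ι → α → ℝ} (hf : ∀ i, LipschitzWith K (f i)) (hbdd : ∀ x, BddAbove (range (f · x))) :
    LipschitzWith K fun x ↦ ⨆ i, f i x := by
  refine .of_le_add_mul K fun x y ↦ ciSup_le fun i ↦ ((hf i).le_add_mul x y).trans ?_
  gcongr
  exact le_ciSup (hbdd y) i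

variable {E : Type*} [NormedAddCommGroup E] [InnerProductSpace ℝ E] {g : E → ℝ} {Ω D : Set E}
  {R : ℝ≥0}

/-- The pairs `(z, q)` such that `q` is the slope of an affine function supporting `g` from below on
`Ω` and touching it at `z`, restricted to contact points in `D` and slopes of norm at most `R`. -/
def contactPairs (g : E → ℝ) (Ω D : Set E) (R : ℝ≥0) : Set (E × E) :=
  {c | c.1 ∈ D ∧ ‖c.2‖ ≤ R ∧ IsSubgradientOn g Ω c.1 c.2}

lemma isCompact_contactPairs [ProperSpace E] (hD : IsCompact D) (hg : ContinuousOn g D) :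
    IsCompact (contactPairs g Ω D R) := by
  have hcompact : IsCompact (D ×ˢ closedBall (0 : E) R) := hD.prod (isCompact_closedBall 0 R)
  have hclosed (w : E) :
      IsClosed {c ∈ D ×ˢ closedBall (0 : E) R | g c.1 + ⟪c.2, w - c.1⟫_ℝ ≤ g w} := by
    refine hcompact.isClosed.isClosed_le (.add ?_ (by fun_prop)) continuousOn_const
    exact hg.comp continuousOn_fst fun c hc ↦ hc.1
  convert hcompact.inter_right (isClosed_biInter fun w (_ : w ∈ Ω) ↦ hclosed w) using 1
  ext c
  simp only [contactPairs, IsSubgradientOn, mem_ofPred_eq, mem_inter_iff, mem_iInter, mem_prod,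
    mem_closedBall_zero_iff]
  exact ⟨fun ⟨hz, hq, hsub⟩ ↦ ⟨⟨hz, hq⟩, fun w hw ↦ ⟨⟨hz, hq⟩, hsub w hw⟩⟩,
    fun ⟨⟨hz, hq⟩, hsub⟩ ↦ ⟨hz, hq, fun w hw ↦ (hsub w hw).2⟩⟩

/-- The supremum of the affine functions recorded by `contactPairs g Ω D R`. -/
def supportEnvelope (g : E → ℝ) (Ω D : Set E) (R : ℝ≥0) (x : E) : ℝ :=
  ⨆ c : contactPairs g Ω D R, g c.1.1 + ⟪c.1.2, x - c.1.1⟫_ℝ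

lemma lipschitzWith_const_add_inner_sub {q : E} (hq : ‖q‖ ≤ R) (a : ℝ) (z : E) :
    LipschitzWith R fun x ↦ a + ⟪q, x - z⟫_ℝ := by
  refine .of_le_add_mul R fun x y ↦ ?_
  have hcs : ⟪q, x - y⟫_ℝ ≤ R * dist x y := by
    rw [dist_eq_norm]
    exact (real_inner_le_norm q _).trans (by gcongr)
  rw [← sub_add_sub_cancel x y z, inner_add_right]
  linarith

lemma convexOn_const_add_inner_sub (q : E) (a : ℝ) (z : E) :
    ConvexOn ℝ univ fun x ↦ a + ⟪q, x - z⟫_ℝ := by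
  simp only [inner_sub_right, add_sub_left_comm a]
  exact ((innerₛₗ ℝ q).convexOn convex_univ).add_const _

lemma bddAbove_range_contactPairs (hD : D ⊆ Ω) (x : E) :
    BddAbove (range fun c : contactPairs g Ω D R ↦ g c.1.1 + ⟪c.1.2, x - c.1.1⟫_ℝ) := by
  rcases isEmpty_or_nonempty (contactPairs g Ω D R) with _ | ⟨w, hw, -⟩
  · rw [range_eq_empty]
    exact bddAbove_empty
  · refine ⟨g w.1 + R * dist x w.1, forall_mem_range.2 fun ⟨c, _, hR, hsub⟩ ↦ ?_⟩
    exact ((lipschitzWith_const_add_inner_sub hR _ _).le_add_mul x w.1).trans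
      (add_le_add_left (hsub _ (hD hw)) _)

lemma convexOn_supportEnvelope (hD : D ⊆ Ω) [Nonempty (contactPairs g Ω D R)] :
    ConvexOn ℝ univ (supportEnvelope g Ω D R) :=
  convexOn_ciSup (fun c ↦ convexOn_const_add_inner_sub c.1.2 _ _) (bddAbove_range_contactPairs hD)

lemma lipschitzWith_supportEnvelope (hD : D ⊆ Ω) [Nonempty (contactPairs g Ω D R)] :
    LipschitzWith R (supportEnvelope g Ω D R) :=
  lipschitzWith_ciSup (fun c ↦ lipschitzWith_const_add_inner_sub c.2.2.1 _ _)
    (bddAbove_range_contactPairs hD)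

lemma supportEnvelope_le [Nonempty (contactPairs g Ω D R)] {w : E} (hw : w ∈ Ω) :
    supportEnvelope g Ω D R w ≤ g w :=
  ciSup_le fun c ↦ c.2.2.2 w hw

lemma le_supportEnvelope (hD : D ⊆ Ω) {c : E × E} (hc : c ∈ contactPairs g Ω D R) (x : E) :
    g c.1 + ⟪c.2, x - c.1⟫_ℝ ≤ supportEnvelope g Ω D R x :=
  le_ciSup (bddAbove_range_contactPairs hD x) ⟨c, hc⟩

lemma supportEnvelope_fst (hD : D ⊆ Ω) {c : E × E} (hc : c ∈ contactPairs g Ω D R) :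
    supportEnvelope g Ω D R c.1 = g c.1 := by
  have : Nonempty (contactPairs g Ω D R) := ⟨c, hc⟩
  refine (supportEnvelope_le (hD hc.1)).antisymm ?_
  simpa only [sub_self, inner_zero_right, add_zero] using le_supportEnvelope hD hc c.1

lemma isSubgradientOn_supportEnvelope (hD : D ⊆ Ω) {c : E × E}
    (hc : c ∈ contactPairs g Ω D R) :
    IsSubgradientOn (supportEnvelope g Ω D R) univ c.1 c.2 := fun x _ ↦ by
  rw [supportEnvelope_fst hD hc]
  exact le_supportEnvelope hD hc x

end SupportEnvelope

section SecondOrder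

open Set Filter
open scoped Topology

variable {E : Type*} [NormedAddCommGroup E] [InnerProductSpace ℝ E]

/-- The quadratic polynomial with critical value `0`, gradient `q` and Hessian `L` at `z₀`. -/
def quadratic (q : E) (L : E →L[ℝ] E) (z₀ z : E) : ℝ :=
  ⟪q, z - z₀⟫_ℝ + 1 / 2 * ⟪L (z - z₀), z - z₀⟫_ℝ

lemma quadratic_sub_smul_id (q a : E) (L : E →L[ℝ] E) (k : ℝ) (z₀ z : E) :
    quadratic (q - a) (L - k • ContinuousLinearMap.id ℝ E) z₀ z =
      quadratic q L z₀ z - ⟪a, z - z₀⟫_ℝ - k / 2 * ‖z - z₀‖ ^ 2 := by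
  rw [quadratic, quadratic, sub_apply, smul_apply, ContinuousLinearMap.id_apply, inner_sub_left q,
    inner_sub_left (L _), real_inner_smul_left, real_inner_self_eq_norm_sq]
  ring

lemma contDiff_quadratic (q : E) (L : E →L[ℝ] E) (z₀ : E) : ContDiff ℝ 2 (quadratic q L z₀) := by
  have hL : ContDiff ℝ 2 fun z ↦ L (z - z₀) := by fun_prop
  have hsub : ContDiff ℝ 2 fun z ↦ z - z₀ := by fun_prop
  exact (contDiff_const.inner ℝ hsub).add (contDiff_const.mul (hL.inner ℝ hsub))

lemma hasGradientAt_quadratic [CompleteSpace E] (q : E) {L : E →L[ℝ] E}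
    (hL : (L : E →ₗ[ℝ] E).IsSymmetric) (z₀ z : E) :
    HasGradientAt (quadratic q L z₀) (q + L (z - z₀)) z := by
  rw [hasGradientAt_iff_hasFDerivAt]
  have hsub : HasFDerivAt (fun z ↦ z - z₀) (ContinuousLinearMap.id ℝ E) z :=
    (hasFDerivAt_id z).sub_const z₀
  refine (((hasFDerivAt_const q z).inner ℝ hsub).add
    (((L.hasFDerivAt.comp z hsub).inner ℝ hsub).const_mul (1 / 2))).congr_fderiv ?_
  ext h
  have hsymm : ⟪L h, z - z₀⟫_ℝ = ⟪L (z - z₀), h⟫_ℝ := (hL h _).trans (real_inner_comm _ _)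
  simp only [add_apply, ContinuousLinearMap.comp_apply,
    ContinuousLinearMap.prod_apply, smul_apply, fderivInnerCLM_apply,
    zero_apply, ContinuousLinearMap.id_apply, inner_zero_left, add_zero,
    InnerProductSpace.toDual_apply_apply, inner_add_left, hsymm, smul_eq_mul, Function.comp_apply]
  ring

lemma hasFDerivAt_fderiv_of_hasGradientAt [CompleteSpace E] {e : E → ℝ} {p : E → E}
    {T : E →L[ℝ] E} {x : E} (he : ∀ y, HasGradientAt e (p y) y) (hp : HasFDerivAt p T x) :
    HasFDerivAt (fderiv ℝ e) ((innerSL ℝ).comp T) x := by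
  have hfderiv : fderiv ℝ e = innerSL ℝ ∘ p := funext fun y ↦ (he y).hasFDerivAt.fderiv
  rw [hfderiv]
  exact (innerSL ℝ).hasFDerivAt.comp x hp

lemma isSymmetric_of_hasGradientAt [CompleteSpace E] {e : E → ℝ} {p : E → E} {T : E →L[ℝ] E}
    {x : E} (he : ∀ y, HasGradientAt e (p y) y) (hp : HasFDerivAt p T x) :
    (T : E →ₗ[ℝ] E).IsSymmetric := fun h k ↦ by
  have hsymm : ⟪T h, k⟫_ℝ = ⟪T k, h⟫_ℝ :=
    second_derivative_symmetric (fun y ↦ (he y).differentiableAt.hasFDerivAt)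
      (hasFDerivAt_fderiv_of_hasGradientAt he hp) h k
  exact hsymm.trans (real_inner_comm _ _)

lemma isPositive_of_hasGradientAt [CompleteSpace E] {e : E → ℝ} {p : E → E} {T : E →L[ℝ] E}
    {x : E} (he : ∀ y, HasGradientAt e (p y) y) (hp : HasFDerivAt p T x)
    (hmono : ∀ y z, 0 ≤ ⟪p y - p z, y - z⟫_ℝ) : (T : E →ₗ[ℝ] E).IsPositive := by
  refine ⟨isSymmetric_of_hasGradientAt he hp, fun h ↦ ?_⟩
  have hslope : Tendsto (fun t : ℝ ↦ ⟪t⁻¹ • (p (x + t • h) - p x), h⟫_ℝ) (𝓝[>] 0)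
      (𝓝 ⟪T h, h⟫_ℝ) := by
    have hline : HasDerivAt (fun t : ℝ ↦ p (x + t • h)) (T h) 0 := hp.hasLineDerivAt h
    simpa only [zero_add, zero_smul, add_zero] using
      hline.tendsto_slope_zero_right.inner tendsto_const_nhds
  refine ge_of_tendsto hslope (eventually_mem_nhdsWithin.mono fun t (ht : 0 < t) ↦ ?_)
  have hinc := hmono (x + t • h) x
  rw [add_sub_cancel_left, real_inner_smul_right] at hinc
  rw [real_inner_smul_left]
  exact mul_nonneg (inv_nonneg.2 ht.le) (nonneg_of_mul_nonneg_right hinc ht)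

lemma eventually_add_quadratic_sub_le [CompleteSpace E] {e : E → ℝ} {p : E → E} {T : E →L[ℝ] E}
    {x₀ : E} (he : ∀ x, HasGradientAt e (p x) x) (hp : HasFDerivAt p T x₀) {η : ℝ} (hη : 0 < η) :
    ∀ᶠ x in 𝓝 x₀, e x₀ + quadratic (p x₀) T x₀ x - η * ‖x - x₀‖ ^ 2 ≤ e x := by
  have hT := isSymmetric_of_hasGradientAt he hp
  obtain ⟨δ, hδ, hbound⟩ :=
    Metric.eventually_nhds_iff_ball.1 ((hasFDerivAt_iff_isLittleO.1 hp).bound hη)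
  refine Metric.eventually_nhds_iff_ball.2 ⟨δ, hδ, fun x hx ↦ ?_⟩
  have hgrad (y : E) : HasFDerivAt (fun x ↦ e x - quadratic (p x₀) T x₀ x)
      (InnerProductSpace.toDual ℝ E (p y - p x₀ - T (y - x₀))) y := by
    rw [sub_sub, map_sub]
    exact (he y).hasFDerivAt.sub (hasGradientAt_quadratic (p x₀) hT x₀ y).hasFDerivAt
  have hmvt := (convex_closedBall x₀ ‖x - x₀‖).norm_image_sub_le_of_norm_hasFDerivWithin_le
    (C := η * ‖x - x₀‖) (fun y _ ↦ (hgrad y).hasFDerivWithinAt) (fun y hy ↦ ?_)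
    (mem_closedBall_self (norm_nonneg _)) (mem_closedBall_iff_norm.2 le_rfl)
  · have hlower := neg_le_of_abs_le hmvt
    simp only [quadratic, sub_self, inner_zero_right, mul_zero, add_zero, sub_zero] at hlower ⊢
    linarith
  · rw [mem_closedBall_iff_norm] at hy
    rw [LinearIsometryEquiv.norm_map]
    refine (hbound y ?_).trans (by gcongr)
    rw [mem_ball_iff_norm] at hx ⊢
    exact hy.trans_lt hx

lemma hessianMatrix_of_hasGradientAt {n : ℕ} {φ : Euc n → ℝ} {p : Euc n → Euc n}
    {T : Euc n →L[ℝ] Euc n} {x : Euc n} (hφ : ∀ y, HasGradientAt φ (p y) y)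
    (hp : HasFDerivAt p T x) :
    hessianMatrix φ x = LinearMap.toMatrix (EuclideanSpace.basisFun (Fin n) ℝ).toBasis
      (EuclideanSpace.basisFun (Fin n) ℝ).toBasis (T : Euc n →ₗ[ℝ] Euc n) := by
  ext i j
  have hsymm : ⟪T (EuclideanSpace.single i 1), EuclideanSpace.single j 1⟫_ℝ =
      ⟪EuclideanSpace.single i 1, T (EuclideanSpace.single j 1)⟫_ℝ :=
    isSymmetric_of_hasGradientAt hφ hp _ _
  rw [hessianMatrix, Matrix.of_apply, iteratedFDeriv_two_apply,
    (hasFDerivAt_fderiv_of_hasGradientAt hφ hp).fderiv, LinearMap.toMatrix_apply]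
  simpa [EuclideanSpace.inner_single_left] using hsymm

end SecondOrder

section MatrixInequalities

open scoped ComplexOrder MatrixOrder Matrix.Norms.L2Operator

variable {m : Type*} [Fintype m]

lemma trace_mul_nonneg {A B : Matrix m m ℝ} (hA : A.PosSemidef) (hB : B.PosSemidef) :
    0 ≤ (A * B).trace := by
  classical
  obtain ⟨C, rfl⟩ := CStarAlgebra.nonneg_iff_eq_star_mul_self.1 hB.nonneg
  rw [← mul_assoc, Matrix.trace_mul_comm, ← mul_assoc]
  exact (hA.mul_mul_conjTranspose_same C).trace_nonneg

lemma det_le_trace_div_card_pow [DecidableEq m] {S : Matrix m m ℝ} (hS : S.PosSemidef) :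
    S.det ≤ (S.trace / Fintype.card m) ^ Fintype.card m := by
  rcases isEmpty_or_nonempty m with _ | _
  · simp
  have hcard : (0 : ℝ) < Fintype.card m := by positivity
  have hamgm := Real.geom_mean_le_arith_mean Finset.univ 1 hS.isHermitian.eigenvalues
    (fun _ _ ↦ zero_le_one) (by simpa using hcard) fun i _ ↦ hS.eigenvalues_nonneg i
  simp only [Pi.one_apply, Real.rpow_one, one_mul, Finset.sum_const, Finset.card_univ, nsmul_one]
    at hamgm
  have hdet : S.det = ∏ i, hS.isHermitian.eigenvalues i := by
    simpa using hS.isHermitian.det_eq_prod_eigenvalues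
  have htrace : S.trace = ∑ i, hS.isHermitian.eigenvalues i := by
    simpa using hS.isHermitian.trace_eq_sum_eigenvalues
  rw [← hdet, ← htrace] at hamgm
  have hmean : 0 ≤ S.trace / Fintype.card m := div_nonneg hS.trace_nonneg hcard.le
  exact_mod_cast (Real.rpow_inv_le_iff_of_pos hS.det_nonneg hmean hcard).1 hamgm

lemma abs_det_le_pow_of_isPositive {E : Type*} [NormedAddCommGroup E] [InnerProductSpace ℝ E]
    [FiniteDimensional ℝ E] {T : E →L[ℝ] E} (hT : (T : E →ₗ[ℝ] E).IsPositive) {c : ℝ}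
    (hc : LinearMap.trace ℝ E T ≤ Module.finrank ℝ E * c) :
    |T.det| ≤ c ^ Module.finrank ℝ E := by
  let b := stdOrthonormalBasis ℝ E
  have hS := (LinearMap.posSemidef_toMatrix_iff b).2 hT
  have hdet : T.det = (LinearMap.toMatrix b.toBasis b.toBasis (T : E →ₗ[ℝ] E)).det :=
    (LinearMap.det_toMatrix _ _).symm
  rw [LinearMap.trace_eq_matrix_trace ℝ b.toBasis] at hc
  rw [hdet, abs_of_nonneg hS.det_nonneg]
  refine (det_le_trace_div_card_pow hS).trans ?_
  rw [Fintype.card_fin]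
  rcases (Module.finrank ℝ E).eq_zero_or_pos with h₀ | hpos
  · simp only [h₀, pow_zero, le_refl]
  · exact pow_le_pow_left₀ (div_nonneg hS.trace_nonneg (Nat.cast_nonneg _))
      ((div_le_iff₀' (Nat.cast_pos.2 hpos)).2 hc) _

end MatrixInequalities

section Pucci

variable {n : ℕ} {lam Lam : ℝ}

lemma mul_trace_sub_mul_trace_le_pucciInf (hLam : lam ≤ Lam) {P N : Matrix (Fin n) (Fin n) ℝ}
    (hP : P.PosSemidef) (hN : N.PosSemidef) :
    lam * P.trace - Lam * N.trace ≤ pucciInf lam Lam (P - N) := by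
  refine le_csInf ⟨_, lam • 1, ?_, ?_, ?_, rfl⟩ ?_
  · exact Matrix.isSymm_one.smul lam
  · simpa only [matLE, sub_self] using Matrix.PosSemidef.zero
  · simpa only [matLE, ← sub_smul] using Matrix.PosSemidef.one.smul (sub_nonneg.2 hLam)
  · rintro _ ⟨A, -, hlower, hupper, rfl⟩
    have hPtrace := trace_mul_nonneg hlower hP
    have hNtrace := trace_mul_nonneg hupper hN
    rw [sub_mul, Matrix.trace_sub, smul_one_mul, Matrix.trace_smul, smul_eq_mul]
      at hPtrace hNtrace
    rw [mul_sub, Matrix.trace_sub]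
    linarith

end Pucci

section Area

open Set
open scoped NNReal

variable {E : Type*} [NormedAddCommGroup E] [NormedSpace ℝ E] [FiniteDimensional ℝ E]
  [MeasurableSpace E] [BorelSpace E] (μ : Measure E) [μ.IsAddHaarMeasure]

lemma addHaar_image_eq_zero_of_lipschitzWith {p : E → E} {K : ℝ≥0} (hp : LipschitzWith K p)
    {s : Set E} (hs : μ s = 0) : μ (p '' s) = 0 := by
  let d := Module.finrank ℝ E
  have hhausdorff : Measure.hausdorffMeasure (d : ℝ) s = 0 :=
    Measure.absolutelyContinuous_isAddHaarMeasure _ μ hs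
  have himage : Measure.hausdorffMeasure (d : ℝ) (p '' s) = 0 := by
    simpa only [hhausdorff, mul_zero, nonpos_iff_eq_zero] using
      hp.hausdorffMeasure_image_le d.cast_nonneg s
  exact Measure.absolutelyContinuous_isAddHaarMeasure μ _ himage

lemma addHaar_image_le_mul_of_abs_det_fderiv_le {p : E → E} {K : ℝ≥0} (hp : LipschitzWith K p)
    {s : Set E} (hs : MeasurableSet s) {M : ℝ}
    (hM : ∀ x ∈ s, DifferentiableAt ℝ p x → |(fderiv ℝ p x).det| ≤ M) :
    μ (p '' s) ≤ ENNReal.ofReal M * μ s := by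
  let N := {x | DifferentiableAt ℝ p x}
  have hNmeas : MeasurableSet N := measurableSet_of_differentiableAt ℝ p
  have hnull : μ (p '' (s \ N)) = 0 :=
    addHaar_image_eq_zero_of_lipschitzWith μ hp
      (measure_mono_null (fun _ hx ↦ hx.2) (ae_iff.1 hp.ae_differentiableAt))
  calc μ (p '' s) = μ (p '' (s ∩ N) ∪ p '' (s \ N)) := by rw [← image_union, inter_union_sdiff]
    _ ≤ μ (p '' (s ∩ N)) + μ (p '' (s \ N)) := measure_union_le _ _
    _ = μ (p '' (s ∩ N)) := by rw [hnull, add_zero]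
    _ ≤ ∫⁻ x in s ∩ N, ENNReal.ofReal |(fderiv ℝ p x).det| ∂μ :=
      addHaar_image_le_lintegral_abs_det_fderiv μ (hs.inter hNmeas) fun x hx ↦
        (DifferentiableAt.hasFDerivAt hx.2).hasFDerivWithinAt
    _ ≤ ∫⁻ _ in s ∩ N, ENNReal.ofReal M ∂μ :=
      setLIntegral_mono measurable_const fun x hx ↦ ENNReal.ofReal_le_ofReal (hM x hx.1 hx.2)
    _ = ENNReal.ofReal M * μ (s ∩ N) := setLIntegral_const _ _
    _ ≤ ENNReal.ofReal M * μ s := mul_le_mul_right (measure_mono inter_subset_left) _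

end Area

section Tilt

open Set
open scoped NNReal

variable {E : Type*} [NormedAddCommGroup E] {g : E → ℝ} {Ω : Set E} {a c x₀ q₀ : E} {m r δ ρ : ℝ}
  {R : ℝ≥0}

/-- `v` plus the convex paraboloid of opening `K`: concave paraboloids of opening `K` touching `v`
from below become affine functions touching `tilt K v` from below. -/
def tilt (K : ℝ) (v : E → ℝ) (x : E) : ℝ :=
  v x + K / 2 * ‖x‖ ^ 2

lemma continuousOn_tilt {v : E → ℝ} {s : Set E} (hv : ContinuousOn v s) (K : ℝ) :
    ContinuousOn (tilt K v) s :=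
  hv.add (by fun_prop)

lemma tilt_tilt (K k : ℝ) (v : E → ℝ) : tilt K (tilt k v) = tilt (k + K) v := by
  ext x
  rw [tilt, tilt, tilt]
  ring

variable [InnerProductSpace ℝ E]

lemma tilt_sub_tilt (K : ℝ) (v : E → ℝ) (x y : E) :
    tilt K v y - tilt K v x = v y - v x + K * ⟪x, y - x⟫_ℝ + K / 2 * ‖y - x‖ ^ 2 := by
  have hsq : ‖y‖ ^ 2 = ‖x‖ ^ 2 + 2 * ⟪x, y - x⟫_ℝ + ‖y - x‖ ^ 2 := by
    rw [← norm_add_sq_real, add_sub_cancel]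
  rw [tilt, tilt, hsq]
  ring

lemma exists_isSubgradientOn_tilt [ProperSpace E] (hg : ContinuousOn g (closedBall a ρ))
    (hx₀ : x₀ ∈ closedBall a δ) (hq₀ : IsSubgradientOn g Ω x₀ q₀) (hm : 0 ≤ m)
    (hc : c ∈ closedBall a r) (hρ : 2 * r + δ ≤ ρ) :
    ∃ z ∈ closedBall a ρ, IsSubgradientOn (tilt m g) Ω z (q₀ + m • c) := by
  rw [mem_closedBall_iff_norm] at hx₀ hc
  -- Up to an additive constant, `h` is `tilt m g` minus the affine function of slope `q₀ + m • c`.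
  let h x := g x - ⟪q₀, x⟫_ℝ + m / 2 * ‖x - c‖ ^ 2
  have hx₀ρ : x₀ ∈ closedBall a ρ :=
    mem_closedBall_iff_norm.2 (by linarith [norm_nonneg (c - a)])
  obtain ⟨z, hz, hmin⟩ :=
    (isCompact_closedBall a ρ).exists_isMinOn (f := h) ⟨x₀, hx₀ρ⟩ (by fun_prop)
  have houtside : ∀ w ∈ Ω, w ∉ closedBall a ρ → h x₀ ≤ h w := by
    intro w hw hwρ
    rw [mem_closedBall_iff_norm, not_le] at hwρ
    have hx₀c := norm_sub_le_norm_sub_add_norm_sub x₀ a c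
    have hwa := norm_sub_le_norm_sub_add_norm_sub w c a
    rw [norm_sub_rev a c] at hx₀c
    have hfar : m / 2 * ‖x₀ - c‖ ^ 2 ≤ m / 2 * ‖w - c‖ ^ 2 := by
      gcongr
      linarith
    have hsub := hq₀ w hw
    rw [inner_sub_right] at hsub
    simp only [h]
    linarith
  refine ⟨z, hz, fun w hw ↦ ?_⟩
  have hzw : h z ≤ h w := by
    by_cases hwρ : w ∈ closedBall a ρ
    · exact hmin hwρ
    · exact (hmin hx₀ρ).trans (houtside w hw hwρ)
  simp only [h, norm_sub_sq_real, real_inner_comm c] at hzw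
  rw [tilt, tilt, inner_add_left, real_inner_smul_left, inner_sub_right, inner_sub_right]
  linarith

lemma closedBall_subset_image_snd_contactPairs [ProperSpace E]
    (hg : ContinuousOn g (closedBall a ρ)) (hx₀ : x₀ ∈ closedBall a δ)
    (hq₀ : IsSubgradientOn g Ω x₀ q₀) (hm : 0 < m) (hρ : 2 * r + δ ≤ ρ)
    (hR : ‖q₀ + m • a‖ + m * r ≤ R) :
    closedBall (q₀ + m • a) (m * r) ⊆
      Prod.snd '' contactPairs (tilt m g) Ω (closedBall a ρ) R := by
  intro q hq
  have hqR : ‖q‖ ≤ R := (norm_le_norm_add_norm_sub' q _).trans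
    ((add_le_add_right (mem_closedBall_iff_norm.1 hq) _).trans hR)
  obtain ⟨c, rfl⟩ : ∃ c, q₀ + m • c = q :=
    ⟨m⁻¹ • (q - q₀), by rw [smul_inv_smul₀ hm.ne', add_sub_cancel]⟩
  have hc : c ∈ closedBall a r := by
    rwa [mem_closedBall, dist_add_left, dist_smul₀, Real.norm_of_nonneg hm.le,
      mul_le_mul_iff_right₀ hm] at hq
  obtain ⟨z, hz, hsub⟩ := exists_isSubgradientOn_tilt hg hx₀ hq₀ hm.le hc hρ
  exact ⟨(z, _), ⟨hz, hqR, hsub⟩, rfl⟩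

end Tilt

section Viscosity

open Set Filter
open scoped Topology NNReal

variable {n : ℕ} {lam Lam K : ℝ} {Ω D : Set (Euc n)} {v : Euc n → ℝ}

lemma mem_Gm_iff {x : Euc n} :
    x ∈ Gm K v Ω ↔ x ∈ Ω ∧ ∃ q, IsSubgradientOn (tilt K v) Ω x q := by
  refine and_congr_right fun _ ↦ (Equiv.addRight (K • x)).exists_congr fun p ↦ ?_
  refine forall₂_congr fun w _ ↦ ?_
  have htilt := tilt_sub_tilt K v x w
  rw [Equiv.coe_addRight, inner_add_left, real_inner_smul_left, ge_iff_le]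
  constructor <;> intro <;> linarith

lemma ViscSupersol.pucciInf_toMatrix_nonpos (hv : ViscSupersol lam Lam Ω v) {z₀ : Euc n}
    (hz₀ : z₀ ∈ Ω) {q : Euc n} {L : Euc n →L[ℝ] Euc n} (hL : (L : Euc n →ₗ[ℝ] Euc n).IsSymmetric)
    (htouch : ∀ᶠ z in 𝓝[Ω] z₀, v z₀ + quadratic q L z₀ z ≤ v z) :
    pucciInf lam Lam (LinearMap.toMatrix (EuclideanSpace.basisFun (Fin n) ℝ).toBasis
      (EuclideanSpace.basisFun (Fin n) ℝ).toBasis (L : Euc n →ₗ[ℝ] Euc n)) ≤ 0 := by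
  have hgrad : HasFDerivAt (fun z ↦ q + L (z - z₀)) L z₀ := by
    simpa only [map_sub] using (L.hasFDerivAt.sub_const (L z₀)).const_add q
  rw [← hessianMatrix_of_hasGradientAt (hasGradientAt_quadratic q hL z₀) hgrad]
  refine hv z₀ hz₀ _ ⟨univ, isOpen_univ, mem_univ _, (contDiff_quadratic q L z₀).contDiffOn⟩ ?_
  refine htouch.mono fun z hz ↦ ?_
  have hcenter : quadratic q L z₀ z₀ = 0 := by simp [quadratic]
  linarith

lemma ViscSupersol.mul_trace_le (hv : ViscSupersol lam Lam Ω v) (hLam : lam ≤ Lam) (hK : 0 ≤ K)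
    {z₀ : Euc n} (hz₀ : z₀ ∈ Ω) {q : Euc n} {T : Euc n →L[ℝ] Euc n}
    (hT : (T : Euc n →ₗ[ℝ] Euc n).IsPositive)
    (htouch : ∀ᶠ z in 𝓝[Ω] z₀,
      v z₀ + quadratic q (T - K • ContinuousLinearMap.id ℝ (Euc n)) z₀ z ≤ v z) :
    lam * LinearMap.trace ℝ (Euc n) T ≤ n * (K * Lam) := by
  have hsymm : (T - K • ContinuousLinearMap.id ℝ (Euc n) : Euc n →ₗ[ℝ] Euc n).IsSymmetric :=
    hT.isSymmetric.sub (LinearMap.IsSymmetric.id.smul (by simp))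
  have hpucci := hv.pucciInf_toMatrix_nonpos hz₀ hsymm htouch
  rw [ContinuousLinearMap.toLinearMap_sub, ContinuousLinearMap.toLinearMap_smul, map_sub, map_smul,
    ContinuousLinearMap.coe_id, LinearMap.toMatrix_id] at hpucci
  have hlower := mul_trace_sub_mul_trace_le_pucciInf hLam
    ((LinearMap.posSemidef_toMatrix_iff (EuclideanSpace.basisFun (Fin n) ℝ)).2 hT)
    (Matrix.PosSemidef.one.smul hK)
  rw [Matrix.trace_smul, Matrix.trace_one, Fintype.card_fin, smul_eq_mul] at hlower
  rw [LinearMap.trace_eq_matrix_trace ℝ (EuclideanSpace.basisFun (Fin n) ℝ).toBasis]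
  linarith

lemma ViscSupersol.abs_det_le (hv : ViscSupersol lam Lam Ω v) (hlam : 0 < lam) (hLam : lam ≤ Lam)
    (hK : 0 ≤ K) {z₀ : Euc n} (hz₀ : z₀ ∈ Ω) {q : Euc n} {T : Euc n →L[ℝ] Euc n}
    (hT : (T : Euc n →ₗ[ℝ] Euc n).IsPositive)
    (htouch : ∀ η > 0, ∀ᶠ z in 𝓝[Ω] z₀,
      tilt K v z₀ + quadratic q T z₀ z - η * ‖z - z₀‖ ^ 2 ≤ tilt K v z) :
    |T.det| ≤ (K * Lam / lam) ^ n := by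
  have htrace : ∀ k > K, lam * LinearMap.trace ℝ (Euc n) T ≤ n * (k * Lam) := by
    intro k hk
    refine hv.mul_trace_le hLam (hK.trans hk.le) hz₀ hT (q := q - K • z₀) ?_
    filter_upwards [htouch ((k - K) / 2) (half_pos (sub_pos.2 hk))] with z hz
    have htilt := tilt_sub_tilt K v z₀ z
    rw [quadratic_sub_smul_id, real_inner_smul_left]
    linarith
  have htrace_K : lam * LinearMap.trace ℝ (Euc n) T ≤ n * (K * Lam) := by
    have hcont : Tendsto (fun k : ℝ ↦ n * (k * Lam)) (𝓝[>] K) (𝓝 (n * (K * Lam))) :=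
      (Continuous.tendsto (by fun_prop) K).mono_left nhdsWithin_le_nhds
    exact ge_of_tendsto hcont (eventually_mem_nhdsWithin.mono htrace)
  have hdet := abs_det_le_pow_of_isPositive hT (c := K * Lam / lam) (by
    rwa [finrank_euclideanSpace_fin, mul_div_assoc', le_div_iff₀' hlam])
  rwa [finrank_euclideanSpace_fin] at hdet

variable {f : Euc n → ℝ} {τ : ℝ} {z : Euc n → Euc n}

lemma ViscSupersol.abs_det_fderiv_moreauGradient_le (hv : ViscSupersol lam Lam Ω v)
    (hlam : 0 < lam) (hLam : lam ≤ Lam) (hK : 0 ≤ K) (hz : IsProximalMap f τ z) (hτ : 0 < τ)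
    (hf : ∀ w ∈ Ω, f w ≤ tilt K v w) {x : Euc n} (hzx : z x ∈ Ω)
    (hcontact : f (z x) = tilt K v (z x)) (hdiff : DifferentiableAt ℝ (moreauGradient τ z) x) :
    |(fderiv ℝ (moreauGradient τ z) x).det| ≤ (K * Lam / lam) ^ n := by
  have hgrad := hz.hasGradientAt_moreauEnvelope hτ
  refine hv.abs_det_le hlam hLam hK hzx (q := moreauGradient τ z x)
    (isPositive_of_hasGradientAt hgrad hdiff.hasFDerivAt (hz.inner_moreauGradient_sub_nonneg hτ))
    fun η hη ↦ ?_
  -- Translating by `z x - x` turns the paraboloid touching the envelope at `x` into one touching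
  -- `f`, hence `tilt K v`, at `z x`.
  have hshift : Tendsto (fun w ↦ w + (x - z x)) (𝓝[Ω] z x) (𝓝 x) :=
    (Continuous.tendsto' (by fun_prop) _ _ (by abel)).mono_left nhdsWithin_le_nhds
  filter_upwards [self_mem_nhdsWithin, hshift.eventually
    (eventually_add_quadratic_sub_le hgrad hdiff.hasFDerivAt hη)] with w hw htaylor
  have henv := hz.moreauEnvelope_le hτ (w + (x - z x)) w
  rw [add_sub_cancel_left] at henv
  rw [quadratic, show w + (x - z x) - x = w - z x by abel, moreauEnvelope.eq_def f τ z x,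
    hcontact] at htaylor
  rw [quadratic]
  linarith [hf w hw]

lemma ViscSupersol.volume_image_snd_contactPairs_le_cthickening (hv : ViscSupersol lam Lam Ω v)
    (hlam : 0 < lam) (hLam : lam ≤ Lam) (hK : 0 ≤ K) (hDΩ : D ⊆ Ω) (hD : IsCompact D)
    (hvD : ContinuousOn v D) {R : ℝ≥0} (hτ : 0 < τ) :
    volume (Prod.snd '' contactPairs (tilt K v) Ω D R) ≤ ENNReal.ofReal ((K * Lam / lam) ^ n) *
      volume (cthickening (R / τ) (Prod.fst '' contactPairs (tilt K v) Ω D R)) := by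
  rcases isEmpty_or_nonempty (contactPairs (tilt K v) Ω D R) with hempty | _
  · rw [isEmpty_coe_sort.1 hempty, image_empty, measure_empty]
    exact zero_le
  have hlip := lipschitzWith_supportEnvelope (g := tilt K v) (R := R) hDΩ
  obtain ⟨z, hz⟩ := exists_isProximalMap (convexOn_supportEnvelope hDΩ) hlip hτ
  set Z := Prod.fst '' contactPairs (tilt K v) Ω D R
  have hZ : IsClosed (z ⁻¹' Z) :=
    ((isCompact_contactPairs hD (continuousOn_tilt hvD K)).image continuous_fst).isClosed.preimage
      (hz.continuous hτ)
  have hslopes : Prod.snd '' contactPairs (tilt K v) Ω D R ⊆ moreauGradient τ z '' (z ⁻¹' Z) := by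
    rintro _ ⟨c, hc, rfl⟩
    have hsub := isSubgradientOn_supportEnvelope hDΩ hc
    refine ⟨c.1 + τ⁻¹ • c.2, ?_, hz.moreauGradient_add_inv_smul hτ hsub⟩
    rw [mem_preimage, hz.apply_add_inv_smul hτ hsub]
    exact mem_image_of_mem _ hc
  have hnear : z ⁻¹' Z ⊆ cthickening (R / τ) Z := fun x hx ↦
    mem_cthickening_of_dist_le x (z x) _ _ hx (hz.dist_apply_le hτ hlip x)
  refine (measure_mono hslopes).trans ((addHaar_image_le_mul_of_abs_det_fderiv_le volume
    (hz.lipschitzWith_moreauGradient hτ) hZ.measurableSet ?_).trans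
      (mul_le_mul_right (measure_mono hnear) _))
  rintro x ⟨c, hc, hcx⟩ hdiff
  exact hv.abs_det_fderiv_moreauGradient_le hlam hLam hK hz hτ (fun w ↦ supportEnvelope_le)
    (hcx ▸ hDΩ hc.1) (hcx ▸ supportEnvelope_fst hDΩ hc) hdiff

lemma ViscSupersol.volume_image_snd_contactPairs_le (hv : ViscSupersol lam Lam Ω v)
    (hlam : 0 < lam) (hLam : lam ≤ Lam) (hK : 0 ≤ K) (hDΩ : D ⊆ Ω) (hD : IsCompact D)
    (hvD : ContinuousOn v D) {R : ℝ≥0} :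
    volume (Prod.snd '' contactPairs (tilt K v) Ω D R) ≤ ENNReal.ofReal ((K * Lam / lam) ^ n) *
      volume (Prod.fst '' contactPairs (tilt K v) Ω D R) := by
  have hcompact :=
    (isCompact_contactPairs (Ω := Ω) (R := R) hD (continuousOn_tilt hvD K)).image continuous_fst
  have hlim := ENNReal.Tendsto.const_mul (a := ENNReal.ofReal ((K * Lam / lam) ^ n))
    ((tendsto_measure_cthickening_of_isCompact (μ := volume) hcompact).comp
      (tendsto_const_nhds (x := (R : ℝ)).div_atTop tendsto_id)) (Or.inr ENNReal.ofReal_ne_top)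
  exact ge_of_tendsto hlim ((eventually_gt_atTop 0).mono fun τ hτ ↦
    hv.volume_image_snd_contactPairs_le_cthickening hlam hLam hK hDΩ hD hvD hτ)

variable {k r δ ρ : ℝ} {a : Euc n}

lemma image_fst_contactPairs_tilt_subset {R : ℝ≥0} (hDΩ : D ⊆ Ω) :
    Prod.fst '' contactPairs (tilt K v) Ω D R ⊆ Gm K v Ω ∩ D := by
  rintro _ ⟨c, ⟨hcD, -, hsub⟩, rfl⟩
  exact ⟨mem_Gm_iff.2 ⟨hDΩ hcD, c.2, hsub⟩, hcD⟩

lemma volume_closedBall_mul {t : ℝ} (ht : 0 ≤ t) (hr : 0 ≤ r) (x y : Euc n) :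
    volume (closedBall x (t * r)) = ENNReal.ofReal (t ^ n) * volume (closedBall y r) := by
  rw [Measure.addHaar_closedBall_mul volume x ht hr, Measure.addHaar_closedBall_center volume y,
    finrank_euclideanSpace_fin]

theorem ViscSupersol.volume_closedBall_le (hv : ViscSupersol lam Lam Ω v) (hlam : 0 < lam)
    (hLam : lam ≤ Lam) (hK : 0 < K) (hkK : k < K) (hball : closedBall a ρ ⊆ Ω)
    (hvcont : ContinuousOn v (closedBall a ρ)) (hne : (Gm k v Ω ∩ closedBall a δ).Nonempty)
    (hr : 0 ≤ r) (hρ : 2 * r + δ ≤ ρ) :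
    ENNReal.ofReal (((1 - k / K) * (lam / Lam)) ^ n) * volume (closedBall a r) ≤
      volume (Gm K v Ω ∩ closedBall a ρ) := by
  obtain ⟨x₀, hx₀, hx₀δ⟩ := hne
  obtain ⟨-, q₀, hq₀⟩ := mem_Gm_iff.1 hx₀
  have hm : 0 < K - k := sub_pos.2 hkK
  have hLam₀ : 0 < Lam := hlam.trans_le hLam
  obtain ⟨R, hR⟩ : ∃ R : ℝ≥0, (R : ℝ) = ‖q₀ + (K - k) • a‖ + (K - k) * r :=
    ⟨⟨_, by positivity⟩, rfl⟩
  have hslopes := closedBall_subset_image_snd_contactPairs (continuousOn_tilt hvcont k) hx₀δ hq₀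
    hm hρ hR.ge
  rw [tilt_tilt, add_sub_cancel] at hslopes
  have hbound : ENNReal.ofReal ((K - k) ^ n) * volume (closedBall a r) ≤
      ENNReal.ofReal ((K * Lam / lam) ^ n) * volume (Gm K v Ω ∩ closedBall a ρ) := by
    rw [← volume_closedBall_mul hm.le hr (q₀ + (K - k) • a)]
    refine (measure_mono hslopes).trans ((hv.volume_image_snd_contactPairs_le hlam hLam hK.le hball
      (isCompact_closedBall a ρ) hvcont).trans ?_)
    gcongr
    exact image_fst_contactPairs_tilt_subset hball
  have hfactor : K - k = K * Lam / lam * ((1 - k / K) * (lam / Lam)) := by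
    field_simp
  have hpos : 0 < K * Lam / lam := by positivity
  rwa [hfactor, mul_pow, ENNReal.ofReal_mul (by positivity), mul_assoc, ENNReal.mul_le_mul_iff_right
    (by positivity) ENNReal.ofReal_ne_top] at hbound

end Viscosity

section Cube

variable {n : ℕ} {r s lam Lam : ℝ}

lemma volume_cube (r : ℝ) (x : Euc n) : volume (cube r x) = ENNReal.ofReal r ^ n := by
  have hpi : cube r x =
      WithLp.ofLp ⁻¹' Set.pi Set.univ fun i ↦ Set.Ioo (x i - r / 2) (x i + r / 2) := by
    ext y
    simp only [cube, abs_lt, Set.mem_ofPred_eq, Set.mem_preimage, Set.mem_univ_pi, Set.mem_Ioo,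
      neg_lt_sub_iff_lt_add, sub_lt_iff_lt_add']
  rw [hpi, (PiLp.volume_preserving_ofLp (Fin n)).measure_preimage
    (MeasurableSet.univ_pi fun _ ↦ measurableSet_Ioo).nullMeasurableSet, Real.volume_pi_Ioo]
  simp

lemma cube_subset_closedBall (hr : 0 ≤ r) (x : Euc n) :
    cube r x ⊆ closedBall x (√n * r / 2) := by
  intro y hy
  rw [mem_closedBall, EuclideanSpace.dist_eq]
  calc √(∑ i, dist (y i) (x i) ^ 2) ≤ √(∑ _ : Fin n, (r / 2) ^ 2) := by
        gcongr with i
        exact (hy i).le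
    _ = √n * r / 2 := by
        rw [Finset.sum_const, Finset.card_univ, Fintype.card_fin, nsmul_eq_mul,
          Real.sqrt_mul n.cast_nonneg, Real.sqrt_sq (by positivity), mul_div_assoc]

lemma closedBall_subset_cube {ρ : ℝ} (hρ : ρ < s / 2) (x : Euc n) : closedBall x ρ ⊆ cube s x :=
  fun y hy i ↦ by
    rw [← Real.norm_eq_abs, ← PiLp.sub_apply]
    exact (PiLp.norm_apply_le _ i).trans_lt ((mem_closedBall_iff_norm.1 hy).trans_lt hρ)

lemma ofReal_mul_volume_cube_one_le (hn : 2 ≤ n) (hlam : 0 < lam) (hLam : 0 < Lam) (hr : 0 ≤ r)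
    (x : Euc n) :
    ENNReal.ofReal (1 - (1 - (lam / (lam + ((n : ℝ) - 1) * Lam)) ^ n * r ^ n)) *
        volume (cube 1 x) ≤
      ENNReal.ofReal ((lam / Lam) ^ n) * volume (cube r x) := by
  have hn' : (2 : ℝ) ≤ n := by exact_mod_cast hn
  have hdenom : Lam ≤ lam + (n - 1) * Lam := by nlinarith
  have hdenom_pos : 0 < lam + (n - 1) * Lam := hLam.trans_le hdenom
  rw [volume_cube, volume_cube, ENNReal.ofReal_one, one_pow, mul_one, sub_sub_cancel,
    ← ENNReal.ofReal_pow hr, ← ENNReal.ofReal_mul (by positivity)]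
  gcongr

end Cube

theorem stmt_4_general {n : ℕ} {lam Lam k K r s : ℝ} {Ω : Set (Euc n)} {v : Euc n → ℝ} {a : Euc n}
    (hlam : 0 < lam) (hLam : lam ≤ Lam) (hK : 0 < K) (hkK : k < K) (hr : 0 ≤ r)
    (hrs : 2 * (√n * r) < (1 - k / K) * (s - √n * r)) (hcube : cube s a ⊆ Ω)
    (hv : ContinuousOn v (cube s a)) (hsuper : ViscSupersol lam Lam Ω v)
    (hne : (Gm k v Ω ∩ cube r a).Nonempty) :
    ENNReal.ofReal ((lam / Lam) ^ n) * volume (cube r a) ≤ volume (Gm K v Ω ∩ cube s a) := by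
  have hLam₀ : 0 < Lam := hlam.trans_le hLam
  have hθ : 0 < 1 - k / K := sub_pos.2 ((div_lt_one hK).2 hkK)
  obtain ⟨t, ht⟩ : ∃ t, (1 - k / K) * t = √n * r / 2 := ⟨_, mul_div_cancel₀ _ hθ.ne'⟩
  have ht₀ : 0 ≤ t := nonneg_of_mul_nonneg_right (ht ▸ by positivity) hθ
  have hball : closedBall a (2 * t + √n * r / 2) ⊆ cube s a :=
    closedBall_subset_cube (lt_of_mul_lt_mul_left (by linarith) hθ.le) a
  have hvolume : volume (cube r a) ≤
      ENNReal.ofReal ((1 - k / K) ^ n) * volume (closedBall a t) := by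
    rw [← volume_closedBall_mul hθ.le ht₀ a a, ht]
    exact measure_mono (cube_subset_closedBall hr a)
  calc ENNReal.ofReal ((lam / Lam) ^ n) * volume (cube r a)
    _ ≤ ENNReal.ofReal ((lam / Lam) ^ n) *
        (ENNReal.ofReal ((1 - k / K) ^ n) * volume (closedBall a t)) := by gcongr
    _ = ENNReal.ofReal (((1 - k / K) * (lam / Lam)) ^ n) * volume (closedBall a t) := by
        rw [← mul_assoc, ← ENNReal.ofReal_mul (by positivity), ← mul_pow, mul_comm (lam / Lam)]
    _ ≤ volume (Gm K v Ω ∩ closedBall a (2 * t + √n * r / 2)) :=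
        hsuper.volume_closedBall_le hlam hLam hK hkK (hball.trans hcube) (hv.mono hball)
          (hne.mono (Set.inter_subset_inter_right _ (cube_subset_closedBall hr a))) ht₀ le_rfl
    _ ≤ volume (Gm K v Ω ∩ cube s a) := measure_mono (Set.inter_subset_inter_right _ hball)

/-- measure estimate for viscosity supersolutions with explicit σ. -/
theorem stmt_4 (n : ℕ) (hn : 2 ≤ n) (lam Lam : ℝ) (hlam : 0 < lam) (hLam : lam ≤ Lam)
    (Ω : Set (Euc n)) (hΩ : IsOpen Ω) (hQ : closure (cube 2 0) ⊆ Ω)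
    (v : Euc n → ℝ) (hv : ContinuousOn v Ω) (hsuper : ViscSupersol lam Lam Ω v)
    (hne : (Gm (1 / n) v Ω ∩ cube (1 / (4 * Real.sqrt n)) 0).Nonempty) :
    ENNReal.ofReal
        ((1 - (1 - (lam / (lam + ((n : ℝ) - 1) * Lam)) ^ n * (1 / (4 * Real.sqrt n)) ^ n))) *
        volume (cube (1 : ℝ) (0 : Euc n)) ≤
      volume (Gm 32 v Ω ∩ cube 1 0) := by
  have hn' : (2 : ℝ) ≤ n := by exact_mod_cast hn
  have hopening : 1 / (n : ℝ) ≤ 1 / 2 := one_div_le_one_div_of_le two_pos hn'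
  have hdiam : √n * (1 / (4 * √n)) = 1 / 4 := by field_simp
  have hcube : cube 1 0 ⊆ Ω := fun y hy ↦ hQ (subset_closure fun i ↦ (hy i).trans (by norm_num))
  exact (ofReal_mul_volume_cube_one_le hn hlam (hlam.trans_le hLam) (by positivity) 0).trans
    (stmt_4_general hlam hLam (by norm_num) (by linarith) (by positivity)
      (by rw [hdiam]; linarith) hcube (hv.mono hcube) hsuper hne)
end
end
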